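/- arXiv:0705.0741 — 2 statements merged into one kernel-verified Lean document; each statement's English description precedes it below -/
import Mathlib

section
/- Let f ∈ ℂ[x,y] be a primitive homogeneous polynomial of degree d > 1, i.e. f is not of the form g^r for any g ∈ ℂ[x,y] and any integer r > 1. Then C(f) = J_f/D_f, regarded as a module over ℂ[t] with t acting by multiplication by f, is a free ℂ[t]-module of finite rank. -/
open MvPolynomial

/-- The linear map `g ↦ f_x·∂g/∂y − f_y·∂g/∂x` whose range is `D_f`. -/
noncomputable def Dmap (f : MvPolynomial (Fin 2) ℂ) :
    MvPolynomial (Fin 2) ℂ →ₗ[ℂ] MvPolynomial (Fin 2) ℂ where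
  toFun g := pderiv 0 f * pderiv 1 g - pderiv 1 f * pderiv 0 g
  map_add' g h := by simp only [map_add]; ring
  map_smul' c g := by
    simp only [Derivation.map_smul, RingHom.id_apply, smul_sub, mul_smul_comm]

/-- `D_f` as a `ℂ`-subspace of `ℂ[x,y]`. -/
noncomputable def Dsub (f : MvPolynomial (Fin 2) ℂ) :
    Submodule ℂ (MvPolynomial (Fin 2) ℂ) :=
  LinearMap.range (Dmap f)

/-- The Jacobian ideal `J_f = (f_x, f_y)` regarded as a `ℂ`-subspace of `ℂ[x,y]`. -/
noncomputable def Jsub (f : MvPolynomial (Fin 2) ℂ) :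
    Submodule ℂ (MvPolynomial (Fin 2) ℂ) :=
  Submodule.restrictScalars ℂ
    (Ideal.span ({pderiv 0 f, pderiv 1 f} : Set (MvPolynomial (Fin 2) ℂ)))

lemma mulLeft_mem_Jsub (f : MvPolynomial (Fin 2) ℂ) :
    ∀ x ∈ Jsub f, f * x ∈ Jsub f := fun _ hx =>
  Ideal.mul_mem_left _ f hx

/-- Multiplication by `f` on `J_f`. -/
noncomputable def Jmul (f : MvPolynomial (Fin 2) ℂ) : Jsub f →ₗ[ℂ] Jsub f :=
  (LinearMap.mulLeft ℂ f).restrict (p := Jsub f) (q := Jsub f) (mulLeft_mem_Jsub f)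

lemma Jmul_le_comap (f : MvPolynomial (Fin 2) ℂ) :
    (Dsub f).comap (Jsub f).subtype ≤
      ((Dsub f).comap (Jsub f).subtype).comap (Jmul f) := by
  rintro ⟨x, hx⟩ ⟨g, hg⟩
  refine ⟨f * g, ?_⟩
  simp only [Dmap, LinearMap.coe_mk, AddHom.coe_mk, pderiv_mul] at hg ⊢
  have hgx : pderiv 0 f * pderiv 1 g - pderiv 1 f * pderiv 0 g = x := hg
  have h2 : (Jsub f).subtype (Jmul f ⟨x, hx⟩) = f * x := rfl
  rw [h2, ← hgx]
  ring

/-- Multiplication by `f` on `C(f) = J_f/D_f` (the action of `t`). -/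
noncomputable def Cmul (f : MvPolynomial (Fin 2) ℂ) :
    (Jsub f ⧸ (Dsub f).comap (Jsub f).subtype) →ₗ[ℂ]
      (Jsub f ⧸ (Dsub f).comap (Jsub f).subtype) :=
  Submodule.mapQ _ _ (Jmul f) (Jmul_le_comap f)

/-!
Write `{f, g} = f_x g_y - f_y g_x`, so that `D_f` is the image of `{f, ·}`. By Euler's identity
`J_f ⊆ D_f + f R`, so every element of `C(f)` is a class `[f h]`.

Multiplication by `f` is injective on `C(f)`: if `{f, g} = f² q` with `g` homogeneous of degree
`k ≥ d`, then Euler's identity makes `f²` divide `d f ∂g - k g ∂f` for both partial derivatives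
`∂`. Comparing the multiplicities of a prime `p` in `f` and `g`, this forces `f ∣ g`, as `p` cannot
divide both `∂p`; writing `g = f g'` one gets `{f, g'} = f q`. Since the grading also gives
`⋂ fᵏ C(f) = 0`, the module `C(f)` is torsion-free.

The classes `[f h]` with `h` homogeneous of degree `n` form a space `W n` of dimension at most `d`,
because `[f {f, g}] = 0` and the kernel of `{f, ·}` in each degree is at most a line. Multiplication
by `f` embeds `W n` into `W (n + d)`, hence is onto for large `n`, so `C(f)` is finitely
generated, and over a principal ideal domain finitely generated and torsion-free means free.
-/

section Endomorphism

lemma isTorsionFree_of_irreducible {R M : Type*} [CommRing R] [IsDomain R]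
    [IsPrincipalIdealRing R] [AddCommGroup M] [Module R M] {π : R} (hπ : Irreducible π)
    (hinj : ∀ m : M, π • m = 0 → m = 0)
    (hsep : ∀ m : M, (∀ k : ℕ, ∃ m' : M, π ^ k • m' = m) → m = 0) :
    Module.IsTorsionFree R M := by
  refine .of_smul_eq_zero fun p m hm ↦ or_iff_not_imp_left.mpr fun hp ↦ ?_
  obtain ⟨n, q, hq, rfl⟩ := WfDvdMonoid.max_power_factor hp hπ
  have hqm : q • m = 0 := by
    clear hp
    induction n with
    | zero => simpa using hm
    | succ n ih =>
      rw [pow_succ', mul_assoc, mul_smul] at hm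
      exact ih (hinj _ hm)
  obtain ⟨a, b, hab⟩ := hπ.coprime_iff_not_dvd.mpr hq
  -- Modulo the annihilator of `m`, the inverse of `π` is `a`.
  have hfix : (a * π) • m = m := by
    rw [eq_sub_of_add_eq hab, sub_smul, one_smul, mul_smul, hqm, smul_zero, sub_zero]
  refine hsep m fun k ↦ ⟨a ^ k • m, ?_⟩
  rw [smul_smul, ← mul_pow, mul_comm π]
  induction k with
  | zero => rw [pow_zero, one_smul]
  | succ k ih => rw [pow_succ, mul_smul, hfix, ih]

lemma eventually_add_eq_of_le_add_of_le {c : ℕ → ℕ} {d B : ℕ} (hc : ∀ n, c n ≤ c (n + d))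
    (hB : ∀ n, c n ≤ B) : ∃ N, ∀ n ≥ N, c (n + d) = c n := by
  -- The sum of `d` consecutive terms is monotone and bounded, hence eventually constant.
  let s : ℕ → ℕ := fun n ↦ ∑ i ∈ Finset.range d, c (n + i)
  have hs (n : ℕ) : s (n + 1) + c n = s n + c (n + d) := by
    have h := (Finset.sum_range_succ' (fun i ↦ c (n + i)) d).symm.trans
      (Finset.sum_range_succ (fun i ↦ c (n + i)) d)
    simpa only [s, add_assoc, add_comm 1, add_zero] using h
  have hmono : Monotone s := monotone_nat_of_le_succ fun n ↦ by linarith [hs n, hc n]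
  have hbdd : BddAbove (Set.range s) := by
    refine ⟨d * B, ?_⟩
    rintro _ ⟨n, rfl⟩
    simpa using Finset.sum_le_card_nsmul (Finset.range d) _ B fun i _ ↦ hB (n + i)
  obtain ⟨N, hN⟩ := Nat.sSup_mem (Set.range_nonempty s) hbdd
  have hconst (n : ℕ) (hn : N ≤ n) : s n = s N :=
    le_antisymm (hN ▸ le_csSup hbdd ⟨n, rfl⟩) (hmono hn)
  refine ⟨N, fun n hn ↦ ?_⟩
  linarith [hs n, hconst n hn, hconst (n + 1) (by lia)]

variable {K V : Type*} [Field K] [AddCommGroup V] [Module K V]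

lemma eventually_map_eq_of_finrank_le {T : Module.End K V} (hT : Function.Injective T)
    {W : ℕ → Submodule K V} [∀ n, FiniteDimensional K (W n)] {d B : ℕ}
    (hTW : ∀ n, (W n).map T ≤ W (n + d)) (hB : ∀ n, Module.finrank K (W n) ≤ B) :
    ∃ N, ∀ n ≥ N, (W n).map T = W (n + d) := by
  have hmap (n : ℕ) : Module.finrank K ((W n).map T) = Module.finrank K (W n) :=
    (Submodule.equivMapOfInjective T hT (W n)).finrank_eq.symm
  obtain ⟨N, hN⟩ := eventually_add_eq_of_le_add_of_le
    (fun n ↦ hmap n ▸ Submodule.finrank_mono (hTW n)) hB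
  exact ⟨N, fun n hn ↦ Submodule.eq_of_le_of_finrank_eq (hTW n) ((hmap n).trans (hN n hn).symm)⟩

lemma finite_aeval_of_finrank_le {T : Module.End K V} (hT : Function.Injective T)
    {W : ℕ → Submodule K V} [∀ n, FiniteDimensional K (W n)] {d B : ℕ} (hd : d ≠ 0)
    (hTW : ∀ n, (W n).map T ≤ W (n + d)) (hB : ∀ n, Module.finrank K (W n) ≤ B)
    (hW : ⨆ n, W n = ⊤) : Module.Finite (Polynomial K) (Module.AEval' T) := by
  obtain ⟨N, hN⟩ := eventually_map_eq_of_finrank_le hT hTW hB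
  obtain ⟨s, hs⟩ : (⨆ n ∈ Finset.range (N + d), W n).FG :=
    Submodule.fg_biSup _ _ fun n _ ↦ Module.Finite.iff_fg.mp inferInstance
  let P : Submodule (Polynomial K) (Module.AEval' T) :=
    Submodule.span _ (Module.AEval'.of T '' s)
  have hWP (n : ℕ) : W n ≤ (P.restrictScalars K).comap (Module.AEval'.of T).toLinearMap := by
    induction n using Nat.strong_induction_on with | _ n ih
    by_cases hn : n < N + d
    · refine (le_biSup W (Finset.mem_range.mpr hn)).trans (hs ▸ Submodule.span_le.mpr ?_)
      intro v hv
      have : Module.AEval'.of T v ∈ P := Submodule.subset_span ⟨v, hv, rfl⟩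
      exact this
    · obtain ⟨k, rfl⟩ := Nat.exists_eq_add_of_le' (show d ≤ n by lia)
      rw [← hN k (by lia), Submodule.map_le_iff_le_comap]
      intro v hv
      have : Polynomial.X • Module.AEval'.of T v ∈ P := P.smul_mem _ (ih k (by lia) hv)
      rwa [Module.AEval'.X_smul_of] at this
  have hP : P = ⊤ := eq_top_iff.mpr fun m _ ↦
    iSup_le hWP (hW.ge (Submodule.mem_top (x := (Module.AEval'.of T).symm m)))
  exact ⟨hP ▸ Submodule.fg_span (s.finite_toSet.image _)⟩

lemma isTorsionFree_aeval_of_injective {T : Module.End K V} (hT : Function.Injective T)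
    (hsep : ⨅ k : ℕ, LinearMap.range (T ^ k) = ⊥) :
    Module.IsTorsionFree (Polynomial K) (Module.AEval' T) := by
  refine isTorsionFree_of_irreducible Polynomial.irreducible_X (fun m hm ↦ ?_) fun m hm ↦ ?_
  · obtain ⟨v, rfl⟩ := (Module.AEval'.of T).surjective m
    rw [Module.AEval'.X_smul_of, EmbeddingLike.map_eq_zero_iff] at hm
    rw [(map_eq_zero_iff T hT).mp hm, map_zero]
  · obtain ⟨v, rfl⟩ := (Module.AEval'.of T).surjective m
    refine (map_eq_zero_iff _ (Module.AEval'.of T).injective).mpr ?_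
    refine (Submodule.mem_bot K).mp (hsep ▸ (Submodule.mem_iInf _).mpr fun k ↦ ?_)
    obtain ⟨m', hm'⟩ := hm k
    obtain ⟨w, rfl⟩ := (Module.AEval'.of T).surjective m'
    rw [Module.AEval'.X_pow_smul_of] at hm'
    exact ⟨w, (Module.AEval'.of T).injective hm'⟩

end Endomorphism

section Derivation

variable {R A : Type*} [CommRing R] [CommRing A] [Algebra R A]

lemma mul_derivation_pow_mul (δ : Derivation R A A) (p a : A) (n : ℕ) :
    p * δ (p ^ n * a) = p ^ n * (p * δ a + n * a * δ p) := by
  cases n with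
  | zero => simp
  | succ n =>
    simp only [Derivation.leibniz, Derivation.leibniz_pow, smul_eq_mul, nsmul_eq_mul,
      Nat.add_sub_cancel]
    ring

lemma dvd_derivation_of_pow_dvd_wronskian [IsDomain A] (δ : Derivation R A A)
    {p a b c e : A} (hp : Prime p)
    (ha : ¬ p ∣ a) (hb : ¬ p ∣ b) {m s : ℕ} (hne : ¬ p ∣ c * s - e * m)
    (h : p ^ (m + s) ∣ c * (p ^ m * a) * δ (p ^ s * b) - e * (p ^ s * b) * δ (p ^ m * a)) :
    p ∣ δ p := by
  have hmul : p * (c * (p ^ m * a) * δ (p ^ s * b) - e * (p ^ s * b) * δ (p ^ m * a)) =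
      p ^ (m + s) * ((c * s - e * m) * (a * b) * δ p + p * (c * a * δ b - e * b * δ a)) := by
    linear_combination c * (p ^ m * a) * mul_derivation_pow_mul δ p b s
      - e * (p ^ s * b) * mul_derivation_pow_mul δ p a m
  have hdvd : p ∣ (c * s - e * m) * (a * b) * δ p + p * (c * a * δ b - e * b * δ a) := by
    refine (mul_dvd_mul_iff_left (pow_ne_zero (m + s) hp.ne_zero)).mp ?_
    rw [← hmul, mul_comm]
    exact mul_dvd_mul_left p h
  have := (dvd_add_left (dvd_mul_right p _)).mp hdvd
  exact (hp.dvd_or_dvd this).resolve_left (hp.not_dvd_mul hne (hp.not_dvd_mul ha hb))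

end Derivation

section PartialDerivatives

variable {σ R : Type*} [CommRing R]

lemma degreeOf_pderiv_lt {p : MvPolynomial σ R} {i : σ} (h : pderiv i p ≠ 0) :
    degreeOf i (pderiv i p) < degreeOf i p := by
  have hlt {m : σ →₀ ℕ} (hm : m ∈ (pderiv i p).support) : m i < degreeOf i p := by
    have hm' : m + Finsupp.single i 1 ∈ p.support := by
      rw [mem_support_iff, coeff_pderiv] at hm
      exact mem_support_iff.mpr (left_ne_zero_of_mul hm)
    simpa using monomial_le_degreeOf i hm'
  obtain ⟨m, hm⟩ := support_nonempty.mpr h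
  exact (degreeOf_lt_iff (Nat.zero_lt_of_lt (hlt hm))).mpr fun _ ↦ hlt

lemma pderiv_eq_zero_of_dvd [IsDomain R] {p : MvPolynomial σ R} {i : σ} (h : p ∣ pderiv i p) :
    pderiv i p = 0 := by
  by_contra hne
  obtain ⟨q, hq⟩ := h
  have hlt := degreeOf_pderiv_lt hne
  rw [hq] at hne hlt
  rw [degreeOf_mul_eq (left_ne_zero_of_mul hne) (right_ne_zero_of_mul hne)] at hlt
  lia

lemma eq_C_of_pderiv_eq_zero [IsAddTorsionFree R] {p : MvPolynomial σ R}
    (h : ∀ i, pderiv i p = 0) : p = C (coeff 0 p) := by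
  refine coe_injective σ R (MvPowerSeries.pderiv.ext (fun i ↦ ?_) ?_)
  · simp only [MvPowerSeries.pderiv_coe, h, pderiv_C]
  · simp only [← MvPowerSeries.coeff_zero_eq_constantCoeff_apply, coeff_coe, coeff_zero_C]

variable {K : Type*} [Field K] [CharZero K]

lemma exists_not_dvd_pderiv {p : MvPolynomial σ K} (hp : Prime p) : ∃ i, ¬ p ∣ pderiv i p := by
  by_contra! h
  have hC := eq_C_of_pderiv_eq_zero fun i ↦ pderiv_eq_zero_of_dvd (h i)
  refine hp.not_isUnit (hC ▸ (IsUnit.mk0 _ fun h0 ↦ hp.ne_zero ?_).map C)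
  rw [hC, h0, C_0]

lemma dvd_of_sq_dvd_wronskian {f g : MvPolynomial σ K} (hf : f ≠ 0) {d k : ℕ} (hd : 0 < d)
    (hdk : d ≤ k) (h : ∀ i, f ^ 2 ∣ d * f * pderiv i g - k * g * pderiv i f) : f ∣ g := by
  by_cases hg : g = 0
  · exact hg ▸ dvd_zero f
  refine (UniqueFactorizationMonoid.dvd_iff_emultiplicity_le hf).mpr fun p hp ↦ ?_
  obtain ⟨m, a, ha, rfl⟩ := WfDvdMonoid.max_power_factor hf hp.irreducible
  obtain ⟨s, b, hb, rfl⟩ := WfDvdMonoid.max_power_factor hg hp.irreducible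
  obtain ⟨i, hi⟩ := exists_not_dvd_pderiv hp
  simp only [emultiplicity_mul hp, emultiplicity_pow_self_of_prime hp, emultiplicity_eq_zero.mpr ha,
    emultiplicity_eq_zero.mpr hb, add_zero, Nat.cast_le]
  by_contra! hsm
  have hne : (d * s - k * m : ℤ) ≠ 0 := by
    have : d * s < k * m := Nat.mul_lt_mul_of_le_of_lt hdk hsm (hd.trans_le hdk)
    lia
  have hunit : IsUnit (d * s - k * m : MvPolynomial σ K) := by
    simpa using (IsUnit.mk0 _ (Int.cast_ne_zero (α := K).mpr hne)).map C
  refine hi (dvd_derivation_of_pow_dvd_wronskian (pderiv i) hp ha hb (m := m)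
    (fun hdvd ↦ hp.not_isUnit (isUnit_of_dvd_unit hdvd hunit)) (dvd_trans ?_ (h i)))
  rw [mul_pow, ← pow_mul]
  exact dvd_mul_of_dvd_left (pow_dvd_pow p (by lia)) _

end PartialDerivatives

section HomogeneousPolynomials

variable {σ R : Type*} [CommSemiring R]

lemma pderiv_eq_zero_of_isHomogeneous_zero {p : MvPolynomial σ R} (hp : p.IsHomogeneous 0)
    (i : σ) : pderiv i p = 0 := by
  rw [totalDegree_eq_zero_iff_eq_C.mp ((totalDegree_zero_iff_isHomogeneous σ).mpr hp), pderiv_C]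

lemma homogeneousComponent_pderiv (n : ℕ) (i : σ) (p : MvPolynomial σ R) :
    homogeneousComponent n (pderiv i p) = pderiv i (homogeneousComponent (n + 1) p) := by
  ext m
  simp only [coeff_homogeneousComponent, coeff_pderiv, map_add, Finsupp.degree_single,
    Nat.add_right_cancel_iff, ite_mul, zero_mul]

lemma homogeneousComponent_mul_of_isHomogeneous {p : MvPolynomial σ R} {m : ℕ}
    (hp : p.IsHomogeneous m) (n : ℕ) (q : MvPolynomial σ R) :
    homogeneousComponent n (p * q) = if m ≤ n then p * homogeneousComponent (n - m) q else 0 := by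
  let := gradedAlgebra (σ := σ) (R := R)
  simp only [← decomposition.decompose'_apply]
  exact DirectSum.coe_decompose_mul_of_left_mem (homogeneousSubmodule σ R) n hp

lemma mem_of_homogeneousComponent_mem {S : Submodule R (MvPolynomial σ R)} {p : MvPolynomial σ R}
    (h : ∀ n, homogeneousComponent n p ∈ S) : p ∈ S :=
  sum_homogeneousComponent p ▸ S.sum_mem fun n _ ↦ h n

lemma iSup_homogeneousSubmodule : ⨆ n, homogeneousSubmodule σ R n = ⊤ :=
  eq_top_iff.mpr fun _ _ ↦ mem_of_homogeneousComponent_mem fun n ↦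
    Submodule.mem_iSup_of_mem n (homogeneousComponent_mem n _)

lemma finrank_homogeneousSubmodule [Fintype σ] [StrongRankCondition R] (n : ℕ) :
    Module.finrank R (homogeneousSubmodule σ R n) = (Fintype.card σ).multichoose n := by
  classical
  have hset : {m : σ →₀ ℕ | m.degree = n} = (Finset.univ : Finset σ).finsuppAntidiag n := by
    ext m
    simp [Finset.mem_finsuppAntidiag, Finsupp.degree_eq_sum]
  rw [homogeneousSubmodule_eq_finsupp_supported, hset,
    (AddMonoidAlgebra.supportedEquivFinsupp _).finrank_eq, Module.finrank_finsupp_self,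
    ← Nat.card_eq_fintype_card, Nat.card_coe_set_eq, Set.ncard_coe_finset,
    Finset.card_finsuppAntidiag_nat_eq_multichoose, Finset.card_univ]

variable {K : Type*} [Field K]

instance finiteDimensional_homogeneousSubmodule [Finite σ] (n : ℕ) :
    FiniteDimensional K (homogeneousSubmodule σ K n) :=
  Module.Finite.iff_fg.mpr (homogeneousSubmodule_fg σ K n)

lemma exists_smul_eq_of_mul_pderiv_eq [CharZero K] {p q : MvPolynomial σ K} {n : ℕ}
    (hp : p.IsHomogeneous n) (hq : q.IsHomogeneous n) (hp0 : p ≠ 0)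
    (h : ∀ i, p * pderiv i q = q * pderiv i p) : ∃ c : K, c • p = q := by
  obtain ⟨r, rfl⟩ : p ∣ q := dvd_of_sq_dvd_wronskian hp0 one_pos le_rfl fun i ↦ by
    simp only [Nat.cast_one, one_mul, h i, sub_self, dvd_zero]
  by_cases hr : r = 0
  · exact ⟨0, by rw [hr, mul_zero, zero_smul]⟩
  have hdeg := hq.totalDegree (mul_ne_zero hp0 hr)
  rw [totalDegree_mul_of_isDomain hp0 hr, hp.totalDegree hp0, Nat.add_eq_left,
    totalDegree_eq_zero_iff_eq_C] at hdeg
  exact ⟨coeff 0 r, by rw [smul_eq_C_mul, ← hdeg, mul_comm]⟩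

end HomogeneousPolynomials

section Hamiltonian

variable {R : Type*} [CommRing R]

/-- The Hamiltonian derivation `{f, ·} = f_x ∂/∂y - f_y ∂/∂x` of `R[x, y]`, where `x = X 0` and
`y = X 1`. -/
noncomputable def hamiltonian (f : MvPolynomial (Fin 2) R) :
    Derivation R (MvPolynomial (Fin 2) R) (MvPolynomial (Fin 2) R) :=
  pderiv 0 f • pderiv 1 - pderiv 1 f • pderiv 0

lemma hamiltonian_apply (f g : MvPolynomial (Fin 2) R) :
    hamiltonian f g = pderiv 0 f * pderiv 1 g - pderiv 1 f * pderiv 0 g := rfl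

lemma hamiltonian_mul_self (f g : MvPolynomial (Fin 2) R) :
    hamiltonian f (f * g) = f * hamiltonian f g := by
  simp only [hamiltonian_apply, pderiv_mul]
  ring

variable {f g : MvPolynomial (Fin 2) R} {d k : ℕ}

lemma X_zero_mul_pderiv_add_X_one_mul_pderiv (hf : f.IsHomogeneous d) :
    X 0 * pderiv 0 f + X 1 * pderiv 1 f = (d : MvPolynomial (Fin 2) R) * f := by
  simpa only [Fin.sum_univ_two, nsmul_eq_mul] using hf.sum_X_mul_pderiv

lemma homogeneousComponent_hamiltonian (hf : f.IsHomogeneous d) (n : ℕ) :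
    homogeneousComponent n (hamiltonian f g) =
      hamiltonian f (homogeneousComponent (n + 2 - d) g) := by
  obtain rfl | hd := d.eq_zero_or_pos
  · simp only [hamiltonian_apply, pderiv_eq_zero_of_isHomogeneous_zero hf, zero_mul, sub_self,
      map_zero]
  simp only [hamiltonian_apply, map_sub, homogeneousComponent_mul_of_isHomogeneous hf.pderiv,
    homogeneousComponent_pderiv]
  split_ifs with hn
  · rw [show n - (d - 1) + 1 = n + 2 - d by lia]
  · rw [show n + 2 - d = 0 by lia]
    simp only [homogeneousComponent_zero, pderiv_C, mul_zero]

lemma isHomogeneous_hamiltonian (hf : f.IsHomogeneous d) {n : ℕ}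
    (hg : g.IsHomogeneous (n + 2 - d)) : (hamiltonian f g).IsHomogeneous n := by
  rw [← homogeneousComponent_eq_self hg, ← homogeneousComponent_hamiltonian hf]
  exact homogeneousComponent_isHomogeneous n _

/-- Cramer's rule for the two equations `∇f · (x, y) = d f` and `∇g · (x, y) = k g`. -/
lemma hamiltonian_dvd_wronskian (hf : f.IsHomogeneous d) (hg : g.IsHomogeneous k) (i : Fin 2) :
    hamiltonian f g ∣ d * f * pderiv i g - k * g * pderiv i f := by
  have hEf := X_zero_mul_pderiv_add_X_one_mul_pderiv hf
  have hEg := X_zero_mul_pderiv_add_X_one_mul_pderiv hg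
  rw [hamiltonian_apply]
  match i with
  | 0 => exact ⟨-X 1, by linear_combination pderiv 0 f * hEg - pderiv 0 g * hEf⟩
  | 1 => exact ⟨X 0, by linear_combination pderiv 1 f * hEg - pderiv 1 g * hEf⟩

end Hamiltonian

section HamiltonianKernel

variable {K : Type*} [Field K] [CharZero K] {f : MvPolynomial (Fin 2) K} {d : ℕ}

lemma exists_smul_eq_of_hamiltonian_eq_zero (hf : f.IsHomogeneous d) (hf0 : f ≠ 0) (hd : d ≠ 0)
    {g h : MvPolynomial (Fin 2) K} {k : ℕ} (hg : g.IsHomogeneous k) (hh : h.IsHomogeneous k)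
    (hg0 : g ≠ 0) (hfg : hamiltonian f g = 0) (hfh : hamiltonian f h = 0) :
    ∃ c : K, c • g = h := by
  refine exists_smul_eq_of_mul_pderiv_eq hg hh hg0 fun i ↦ ?_
  have hWg := zero_dvd_iff.mp (hfg ▸ hamiltonian_dvd_wronskian hf hg i)
  have hWh := zero_dvd_iff.mp (hfh ▸ hamiltonian_dvd_wronskian hf hh i)
  refine mul_left_cancel₀ (mul_ne_zero (Nat.cast_ne_zero.mpr hd) hf0) ?_
  linear_combination g * hWh - h * hWg

lemma le_finrank_map_hamiltonian (hf : f.IsHomogeneous d) (hf0 : f ≠ 0) (hd : d ≠ 0) (k : ℕ) :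
    k ≤ Module.finrank K ((homogeneousSubmodule (Fin 2) K k).map (hamiltonian f).toLinearMap) := by
  let A := (hamiltonian f).toLinearMap.domRestrict (homogeneousSubmodule (Fin 2) K k)
  have hker : Module.finrank K A.ker ≤ 1 := by
    by_cases hbot : A.ker = ⊥
    · exact (Submodule.finrank_eq_zero.mpr hbot).le.trans zero_le_one
    obtain ⟨g, hg, hg0⟩ := Submodule.exists_mem_ne_zero_of_ne_bot hbot
    refine finrank_le_one ⟨g, hg⟩ fun ⟨h, hh⟩ ↦ ?_
    obtain ⟨c, hc⟩ := exists_smul_eq_of_hamiltonian_eq_zero hf hf0 hd g.2 h.2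
      (Subtype.coe_ne_coe.mpr hg0) hg hh
    exact ⟨c, Subtype.ext (Subtype.ext hc)⟩
  have hrank := A.finrank_range_add_finrank_ker
  rw [finrank_homogeneousSubmodule, Fintype.card_fin, Nat.multichoose_two,
    LinearMap.range_domRestrict] at hrank
  lia

end HamiltonianKernel

section JacobianQuotient

variable {R : Type*} [CommRing R] {f p : MvPolynomial (Fin 2) R} {d : ℕ}

/-- The space `D_f` of all brackets `{f, g}`, as a submodule over the coefficient ring. -/
noncomputable def hamiltonianRange (f : MvPolynomial (Fin 2) R) :
    Submodule R (MvPolynomial (Fin 2) R) :=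
  LinearMap.range (hamiltonian f).toLinearMap

/-- The Jacobian ideal `J_f = (f_x, f_y)`, as a submodule over the coefficient ring. -/
noncomputable def jacobianSubmodule (f : MvPolynomial (Fin 2) R) :
    Submodule R (MvPolynomial (Fin 2) R) :=
  (Ideal.span {pderiv 0 f, pderiv 1 f}).restrictScalars R

lemma mul_mem_hamiltonianRange (hp : p ∈ hamiltonianRange f) : f * p ∈ hamiltonianRange f := by
  obtain ⟨g, rfl⟩ := hp
  exact ⟨f * g, hamiltonian_mul_self f g⟩

lemma homogeneousComponent_mem_hamiltonianRange (hf : f.IsHomogeneous d)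
    (hp : p ∈ hamiltonianRange f) (n : ℕ) : homogeneousComponent n p ∈ hamiltonianRange f := by
  obtain ⟨g, rfl⟩ := hp
  exact ⟨_, (homogeneousComponent_hamiltonian hf n).symm⟩

lemma mul_mem_hamiltonianRange_of_forall_exists (hf : f.IsHomogeneous d) (hd : d ≠ 0)
    (hp : ∀ m : ℕ, ∃ q, f * (p - f ^ m * q) ∈ hamiltonianRange f) :
    f * p ∈ hamiltonianRange f := by
  refine mem_of_homogeneousComponent_mem
    (S := (hamiltonianRange f).comap (LinearMap.mulLeft R f)) fun n ↦ ?_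
  obtain ⟨q, hq⟩ := hp (n + 1)
  have hlt : ¬ d * (n + 1) ≤ n := by
    have := Nat.le_mul_of_pos_left (n + 1) (Nat.pos_of_ne_zero hd)
    lia
  have hn := homogeneousComponent_mem_hamiltonianRange hf hq (n + d)
  rwa [homogeneousComponent_mul_of_isHomogeneous hf, if_pos (by lia), Nat.add_sub_cancel, map_sub,
    homogeneousComponent_mul_of_isHomogeneous (hf.pow _), if_neg hlt, sub_zero] at hn

/-- The quotient `C(f) = J_f / D_f`. Dividing by the preimage of `D_f` in `J_f` avoids carrying the
inclusion `D_f ⊆ J_f` in the definition. -/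
abbrev JacobianQuotient (f : MvPolynomial (Fin 2) R) : Type _ :=
  jacobianSubmodule f ⧸ (hamiltonianRange f).comap (jacobianSubmodule f).subtype

/-- Multiplication by `f` on `C(f)`, which gives the action of `t`. -/
noncomputable def jacobianQuotientMul (f : MvPolynomial (Fin 2) R) :
    Module.End R (JacobianQuotient f) :=
  Submodule.mapQ _ _ ((LinearMap.mulLeft R f).restrict fun _ hp ↦ Ideal.mul_mem_left _ f hp)
    fun _ hp ↦ mul_mem_hamiltonianRange hp

lemma subsingleton_jacobianQuotient (hf : f.IsHomogeneous 0) :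
    Subsingleton (JacobianQuotient f) := by
  have hJ : jacobianSubmodule f = ⊥ := by
    simp [jacobianSubmodule, pderiv_eq_zero_of_isHomogeneous_zero hf]
  have : Subsingleton (jacobianSubmodule f) := Submodule.subsingleton_iff_eq_bot.mpr hJ
  exact (Submodule.mkQ_surjective _).subsingleton

/-- The map `h ↦ [f h]` from `R[x, y]` to `C(f)`, which makes sense once `f ∈ J_f`. -/
noncomputable def mulClass (hfJ : f ∈ jacobianSubmodule f) :
    MvPolynomial (Fin 2) R →ₗ[R] JacobianQuotient f :=
  Submodule.mkQ _ ∘ₗ (LinearMap.mulLeft R f).codRestrict _ fun h ↦ Ideal.mul_mem_right h _ hfJ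

lemma mulClass_eq_zero_iff (hfJ : f ∈ jacobianSubmodule f) :
    mulClass hfJ p = 0 ↔ f * p ∈ hamiltonianRange f :=
  Submodule.Quotient.mk_eq_zero _

lemma jacobianQuotientMul_mulClass (hfJ : f ∈ jacobianSubmodule f) :
    jacobianQuotientMul f (mulClass hfJ p) = mulClass hfJ (f * p) := rfl

lemma jacobianQuotientMul_pow_mulClass (hfJ : f ∈ jacobianSubmodule f) (k : ℕ) :
    (jacobianQuotientMul f ^ k) (mulClass hfJ p) = mulClass hfJ (f ^ k * p) := by
  induction k with
  | zero => simp
  | succ k ih => rw [pow_succ', Module.End.mul_apply, ih, jacobianQuotientMul_mulClass, pow_succ',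
      mul_assoc]

end JacobianQuotient

section HomogeneousJacobianQuotient

variable {K : Type*} [Field K] [CharZero K] {f : MvPolynomial (Fin 2) K} {d : ℕ}

lemma self_mem_jacobianSubmodule (hf : f.IsHomogeneous d) (hd : d ≠ 0) :
    f ∈ jacobianSubmodule f := by
  refine (Submodule.smul_mem_iff _ (Nat.cast_ne_zero (R := K).mpr hd)).mp ?_
  refine Ideal.mem_span_pair.mpr ⟨X 0, X 1, ?_⟩
  rw [X_zero_mul_pderiv_add_X_one_mul_pderiv hf, Nat.cast_smul_eq_nsmul, nsmul_eq_mul]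

lemma mul_pderiv_mem_sup (hf : f.IsHomogeneous d) {a : MvPolynomial (Fin 2) K} {n : ℕ}
    (ha : a.IsHomogeneous n) (i : Fin 2) :
    a * pderiv i f ∈ hamiltonianRange f ⊔ LinearMap.range (LinearMap.mulLeft K f) := by
  have hEf := X_zero_mul_pderiv_add_X_one_mul_pderiv hf
  have hEa := X_zero_mul_pderiv_add_X_one_mul_pderiv ha
  obtain ⟨b, hb⟩ : ∃ b, (n + 1) * (a * pderiv i f) = hamiltonian f b + f * (d * pderiv i a) := by
    match i with
    | 0 =>
      refine ⟨X 1 * a, ?_⟩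
      rw [hamiltonian_apply, pderiv_mul, pderiv_mul, pderiv_X_self, pderiv_X_of_ne one_ne_zero]
      linear_combination pderiv 0 a * hEf - pderiv 0 f * hEa
    | 1 =>
      refine ⟨-(X 0 * a), ?_⟩
      rw [hamiltonian_apply, map_neg, map_neg, pderiv_mul, pderiv_mul, pderiv_X_self,
        pderiv_X_of_ne zero_ne_one]
      linear_combination pderiv 1 a * hEf - pderiv 1 f * hEa
  refine (Submodule.smul_mem_iff _ (Nat.cast_ne_zero (R := K).mpr n.succ_ne_zero)).mp ?_
  rw [Nat.cast_smul_eq_nsmul, nsmul_eq_mul, Nat.cast_succ, hb]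
  exact add_mem (Submodule.mem_sup_left ⟨b, rfl⟩) (Submodule.mem_sup_right ⟨_, rfl⟩)

lemma jacobianSubmodule_le_sup (hf : f.IsHomogeneous d) :
    jacobianSubmodule f ≤ hamiltonianRange f ⊔ LinearMap.range (LinearMap.mulLeft K f) := by
  intro p hp
  obtain ⟨a, b, rfl⟩ := Ideal.mem_span_pair.mp hp
  have hmul (c : MvPolynomial (Fin 2) K) (i : Fin 2) :
      c ∈ (hamiltonianRange f ⊔ LinearMap.range (LinearMap.mulLeft K f)).comap
        (LinearMap.mulRight K (pderiv i f)) :=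
    mem_of_homogeneousComponent_mem fun n ↦
      mul_pderiv_mem_sup hf (homogeneousComponent_isHomogeneous n c) i
  exact add_mem (hmul a 0) (hmul b 1)

lemma mulClass_surjective (hf : f.IsHomogeneous d) (hfJ : f ∈ jacobianSubmodule f) :
    Function.Surjective (mulClass hfJ) := by
  intro c
  obtain ⟨⟨p, hp⟩, rfl⟩ := Submodule.mkQ_surjective _ c
  obtain ⟨u, hu, _, ⟨h, rfl⟩, huh⟩ := Submodule.mem_sup.mp (jacobianSubmodule_le_sup hf hp)
  refine ⟨h, (Submodule.Quotient.eq _).mpr ?_⟩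
  change f * h - p ∈ hamiltonianRange f
  rw [← huh, LinearMap.mulLeft_apply, sub_add_cancel_right]
  exact neg_mem hu

lemma mul_mem_of_sq_mul_mem_hamiltonianRange (hf : f.IsHomogeneous d) (hf0 : f ≠ 0) (hd : d ≠ 0)
    {q : MvPolynomial (Fin 2) K} (hq : f ^ 2 * q ∈ hamiltonianRange f) :
    f * q ∈ hamiltonianRange f := by
  refine mem_of_homogeneousComponent_mem
    (S := (hamiltonianRange f).comap (LinearMap.mulLeft K f)) fun n ↦ ?_
  obtain ⟨g, hg⟩ := hq
  set k := n + d * 2 + 2 - d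
  have hgk : hamiltonian f (homogeneousComponent k g) = f ^ 2 * homogeneousComponent n q := by
    rw [← homogeneousComponent_hamiltonian hf, show hamiltonian f g = f ^ 2 * q from hg,
      homogeneousComponent_mul_of_isHomogeneous (hf.pow 2), if_pos (by lia), Nat.add_sub_cancel]
  obtain ⟨r, hr⟩ : f ∣ homogeneousComponent k g :=
    dvd_of_sq_dvd_wronskian hf0 (Nat.pos_of_ne_zero hd) (show d ≤ k by lia) fun i ↦
      (Dvd.intro _ hgk.symm).trans
        (hamiltonian_dvd_wronskian hf (homogeneousComponent_isHomogeneous k g) i)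
  refine ⟨r, mul_left_cancel₀ hf0 ?_⟩
  calc f * hamiltonian f r = hamiltonian f (homogeneousComponent k g) := by
        rw [hr, hamiltonian_mul_self]
    _ = f * (f * homogeneousComponent n q) := by rw [hgk, sq, mul_assoc]

lemma jacobianQuotientMul_injective (hf : f.IsHomogeneous d) (hf0 : f ≠ 0) (hd : d ≠ 0) :
    Function.Injective (jacobianQuotientMul f) := by
  have hfJ := self_mem_jacobianSubmodule hf hd
  refine (injective_iff_map_eq_zero _).mpr fun c hc ↦ ?_
  obtain ⟨h, rfl⟩ := mulClass_surjective hf hfJ c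
  rw [jacobianQuotientMul_mulClass, mulClass_eq_zero_iff, ← mul_assoc, ← sq] at hc
  exact (mulClass_eq_zero_iff hfJ).mpr (mul_mem_of_sq_mul_mem_hamiltonianRange hf hf0 hd hc)

lemma iInf_range_jacobianQuotientMul_pow (hf : f.IsHomogeneous d) (hd : d ≠ 0) :
    ⨅ m : ℕ, LinearMap.range (jacobianQuotientMul f ^ m) = ⊥ := by
  have hfJ := self_mem_jacobianSubmodule hf hd
  refine eq_bot_iff.mpr fun c hc ↦ ?_
  obtain ⟨p, rfl⟩ := mulClass_surjective hf hfJ c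
  refine (mulClass_eq_zero_iff hfJ).mpr
    (mul_mem_hamiltonianRange_of_forall_exists hf hd fun m ↦ ?_)
  obtain ⟨b, hb⟩ := (Submodule.mem_iInf _).mp hc m
  obtain ⟨q, rfl⟩ := mulClass_surjective hf hfJ b
  refine ⟨q, (mulClass_eq_zero_iff hfJ).mp ?_⟩
  rw [map_sub, ← jacobianQuotientMul_pow_mulClass, hb, sub_self]

lemma finrank_map_mulClass_le (hf : f.IsHomogeneous d) (hf0 : f ≠ 0) (hd : d ≠ 0)
    (hfJ : f ∈ jacobianSubmodule f) (n : ℕ) :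
    Module.finrank K ((homogeneousSubmodule (Fin 2) K n).map (mulClass hfJ)) ≤ d := by
  let φ := (mulClass hfJ).domRestrict (homogeneousSubmodule (Fin 2) K n)
  let D := (homogeneousSubmodule (Fin 2) K (n + 2 - d)).map (hamiltonian f).toLinearMap
  have hD : D ≤ φ.ker.map (Submodule.subtype _) := by
    rintro _ ⟨g, hg, rfl⟩
    refine ⟨⟨_, isHomogeneous_hamiltonian hf hg⟩, ?_, rfl⟩
    exact (mulClass_eq_zero_iff hfJ).mpr (mul_mem_hamiltonianRange ⟨g, rfl⟩)
  have hker : n + 2 - d ≤ Module.finrank K φ.ker :=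
    calc n + 2 - d ≤ Module.finrank K D := le_finrank_map_hamiltonian hf hf0 hd _
      _ ≤ Module.finrank K (φ.ker.map (Submodule.subtype _)) := Submodule.finrank_mono hD
      _ = Module.finrank K φ.ker := Submodule.finrank_map_subtype_eq _ _
  have hrank := φ.finrank_range_add_finrank_ker
  rw [finrank_homogeneousSubmodule, Fintype.card_fin, Nat.multichoose_two,
    LinearMap.range_domRestrict] at hrank
  lia

lemma finite_aeval_jacobianQuotientMul (hf : f.IsHomogeneous d) (hf0 : f ≠ 0) (hd : d ≠ 0) :
    Module.Finite (Polynomial K) (Module.AEval' (jacobianQuotientMul f)) := by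
  have hfJ := self_mem_jacobianSubmodule hf hd
  refine finite_aeval_of_finrank_le (jacobianQuotientMul_injective hf hf0 hd)
    (W := fun n ↦ (homogeneousSubmodule (Fin 2) K n).map (mulClass hfJ)) hd (fun n ↦ ?_)
    (finrank_map_mulClass_le hf hf0 hd hfJ) ?_
  · rintro _ ⟨_, ⟨h, hh, rfl⟩, rfl⟩
    exact ⟨f * h, add_comm n d ▸ hf.mul hh, rfl⟩
  · rw [← Submodule.map_iSup, iSup_homogeneousSubmodule, Submodule.map_top,
      LinearMap.range_eq_top.mpr (mulClass_surjective hf hfJ)]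

lemma isTorsionFree_aeval_jacobianQuotientMul (hf : f.IsHomogeneous d) (hf0 : f ≠ 0) (hd : d ≠ 0) :
    Module.IsTorsionFree (Polynomial K) (Module.AEval' (jacobianQuotientMul f)) :=
  isTorsionFree_aeval_of_injective (jacobianQuotientMul_injective hf hf0 hd)
    (iInf_range_jacobianQuotientMul_pow hf hd)

end HomogeneousJacobianQuotient

theorem statement8_general {K : Type*} [Field K] [CharZero K] {f : MvPolynomial (Fin 2) K} {d : ℕ}
    (hf : f.IsHomogeneous d) :
    Module.Free (Polynomial K) (Module.AEval' (jacobianQuotientMul f)) ∧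
      Module.Finite (Polynomial K) (Module.AEval' (jacobianQuotientMul f)) := by
  by_cases hconst : f.IsHomogeneous 0
  · have : Subsingleton (Module.AEval' (jacobianQuotientMul f)) :=
      subsingleton_jacobianQuotient hconst
    exact ⟨inferInstance, inferInstance⟩
  have hf0 : f ≠ 0 := by
    rintro rfl
    exact hconst (isHomogeneous_zero _ _ 0)
  have hd : d ≠ 0 := by
    rintro rfl
    exact hconst hf
  have := finite_aeval_jacobianQuotientMul hf hf0 hd
  have := isTorsionFree_aeval_jacobianQuotientMul hf hf0 hd
  exact ⟨Module.free_of_finite_type_torsion_free', inferInstance⟩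

/-- For `f ∈ ℂ[x,y]` primitive homogeneous of degree `d > 1`,
`C(f) = J_f/D_f`, as a `ℂ[t]`-module with `t` acting by multiplication by `f`,
is a free `ℂ[t]`-module of finite rank. -/
theorem statement8 (f : MvPolynomial (Fin 2) ℂ) (d : ℕ) (hd : 1 < d)
    (hf : f.IsHomogeneous d)
    (hprim : ¬ ∃ (g : MvPolynomial (Fin 2) ℂ) (r : ℕ), 1 < r ∧ f = g ^ r) :
    Module.Free (Polynomial ℂ) (Module.AEval' (Cmul f)) ∧
      Module.Finite (Polynomial ℂ) (Module.AEval' (Cmul f)) :=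
  -- Over `ℂ`, `jacobianQuotientMul f` is definitionally `Cmul f`.
  statement8_general hf
end

section
/- Let f ∈ ℂ[x,y,z] be a homogeneous polynomial of degree d > 1. Then the following are equivalent: (i) for every g ∈ ℂ[x,y,z] and every k ≥ 1, if f^k·g ∈ E_f then g ∈ E_f (i.e. the Brieskorn module B(f) = ℂ[x,y,z]/E_f is torsion free over ℂ[t], where t acts by multiplication by f); (ii) the only common zero of f_x, f_y, f_z in ℂ³ is the origin (i.e. f has an isolated singularity at 0). -/
open MvPolynomial

/-- Membership in `E_f = {f_x(∂R/∂y − ∂Q/∂z) + f_y(∂P/∂z − ∂R/∂x) + f_z(∂Q/∂x − ∂P/∂y)}`. -/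
def Emem (f w : MvPolynomial (Fin 3) ℂ) : Prop :=
  ∃ P Q R : MvPolynomial (Fin 3) ℂ,
    w = pderiv 0 f * (pderiv 1 R - pderiv 2 Q) +
        pderiv 1 f * (pderiv 2 P - pderiv 0 R) +
        pderiv 2 f * (pderiv 0 Q - pderiv 1 P)

/-!
Torsion of the Brieskorn module is governed by the syzygies of `∇f`, where `E_f = {∇f ⬝ curl V}`.
If `∇f ⬝ V = 0`, then Euler's relation gives `∇f ⬝ curl (V ⨯ X) = -d f div V`, so
`f div V ∈ E_f`. Conversely, if `f g = ∇f ⬝ curl V`, then Euler's relation makes `g X - d curl V` a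
syzygy, of divergence `(euler + 3) g`.

If the singularity is isolated, then by the Nullstellensatz `(∇f)` contains the regular sequence
`xᵃ, yᵇ, zᶜ`, so every syzygy has the Koszul form `∇f ⨯ W`; its divergence `-∇f ⬝ curl W` lies in
`E_f`, and `euler + 3` can be inverted degree by degree without leaving `E_f`.

If `B(f)` is torsion free, then `div V ∈ J = (∇f)` for every syzygy `V`; applying this to `Xᵢ V`
shows that all coefficients of syzygies lie in `J`. Such a family of three elements cannot vanish on
a line, whose ideal `P = (l₁, l₂)` has height two. Indeed, after a generic linear change `F₀` and
`F₁` are coprime, so `P` is associated to `(F₀, F₁)`, and more precisely `P = (F₀, F₁) : s` for some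
multiple `s` of `F₂`. Writing `l₁ s` and `l₂ s` in terms of `F₀` and `F₁` with coefficients in `J`
and eliminating `s` produces `κ ∉ P` with `κ F₀ ∈ P J`, that is, a syzygy whose coefficient at `F₀`
is outside `P ⊇ J`.
-/

open scoped Matrix

section Euler

variable {σ R : Type*} [CommRing R]

theorem pderiv_comm (i j : σ) (p : MvPolynomial σ R) :
    pderiv i (pderiv j p) = pderiv j (pderiv i p) := by
  classical
  have bracket_eq_zero : ⁅pderiv (R := R) i, pderiv (R := R) j⁆ = 0 := derivation_ext fun k ↦ by
    simp only [Derivation.commutator_apply, pderiv_X, Pi.single_apply, Derivation.zero_apply]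
    split_ifs <;> simp
  rw [← sub_eq_zero, ← Derivation.commutator_apply, bracket_eq_zero, Derivation.zero_apply]

/-- The Euler derivation `∑ i, X i * ∂ᵢ`, which multiplies a form of degree `n` by `n`. -/
noncomputable def euler : Derivation R (MvPolynomial σ R) (MvPolynomial σ R) :=
  mkDerivation R X

@[simp]
theorem euler_X (i : σ) : euler (X i : MvPolynomial σ R) = X i :=
  mkDerivation_X _ _ _

theorem euler_apply [Fintype σ] (p : MvPolynomial σ R) : euler p = ∑ i, X i * pderiv i p := by
  classical
  induction p using MvPolynomial.induction_on with
  | C a => simp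
  | add p q hp hq => simp only [map_add, hp, hq, mul_add, Finset.sum_add_distrib]
  | mul_X p j hp =>
    simp [pderiv_X, Pi.single_apply, hp, mul_add, Finset.sum_add_distrib, Finset.mul_sum,
      mul_left_comm, mul_comm]

theorem pderiv_euler (i : σ) (p : MvPolynomial σ R) :
    pderiv i (euler p) = euler (pderiv i p) + pderiv i p := by
  classical
  have bracket_eq_pderiv : ⁅pderiv (R := R) i, euler (R := R)⁆ = pderiv i := by
    refine derivation_ext fun j ↦ ?_
    simp only [Derivation.commutator_apply, euler_X, pderiv_X, Pi.single_apply]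
    split_ifs <;> simp
  rw [← sub_eq_iff_eq_add', ← Derivation.commutator_apply, bracket_eq_pderiv]

theorem euler_monomial (m : σ →₀ ℕ) (a : R) : euler (monomial m a) = m.degree • monomial m a := by
  have term_eq {i : σ} (hi : i ∈ m.support) :
      monomial (m - Finsupp.single i 1) (m i : R) • (X i : MvPolynomial σ R) =
        m i • monomial m 1 := by
    have single_le : Finsupp.single i 1 ≤ m :=
      Finsupp.single_le_iff.2 (Nat.one_le_iff_ne_zero.2 (Finsupp.mem_support_iff.1 hi))
    rw [smul_eq_mul, X, monomial_mul, mul_one, tsub_add_cancel_of_le single_le, smul_monomial,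
      nsmul_one]
  rw [euler, mkDerivation_monomial, Finsupp.sum, Finset.sum_congr rfl fun _ ↦ term_eq,
    ← Finset.sum_smul, ← Finsupp.degree_apply, smul_comm, smul_monomial, smul_eq_mul, mul_one]

theorem coeff_euler (p : MvPolynomial σ R) (m : σ →₀ ℕ) :
    coeff m (euler p) = m.degree * coeff m p := by
  classical
  induction p using MvPolynomial.induction_on' with
  | monomial n a =>
    rw [euler_monomial, coeff_smul, nsmul_eq_mul, coeff_monomial]
    split_ifs with hnm
    · rw [hnm]
    · simp
  | add p q hp hq => simp only [map_add, coeff_add, hp, hq, mul_add]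

theorem euler_eq_nsmul_of_isHomogeneous {p : MvPolynomial σ R} {n : ℕ} (hp : p.IsHomogeneous n) :
    euler p = n • p := by
  ext m
  rw [coeff_euler, coeff_smul, nsmul_eq_mul]
  obtain hm | hm := eq_or_ne m.degree n
  · rw [hm]
  · rw [hp.coeff_eq_zero hm, mul_zero, mul_zero]

theorem euler_add_nsmul_bijective {K : Type*} [Field K] [CharZero K] {c : ℕ}
    (hc : c ≠ 0) : Function.Bijective fun p : MvPolynomial σ K ↦ euler p + c • p := by
  classical
  have eigenvalue_ne_zero (m : σ →₀ ℕ) : ((m.degree : K) + c) ≠ 0 := by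
    exact_mod_cast (Nat.add_pos_right _ (Nat.pos_of_ne_zero hc)).ne'
  have coeff_shift (p : MvPolynomial σ K) (m : σ →₀ ℕ) :
      coeff m (euler p + c • p) = (m.degree + c) * coeff m p := by
    rw [coeff_add, coeff_euler, coeff_smul, nsmul_eq_mul, add_mul]
  refine ⟨fun p q hpq ↦ ?_, fun p ↦ ?_⟩
  · ext m
    have := congrArg (coeff m) hpq
    simpa only [coeff_shift, mul_right_inj' (eigenvalue_ne_zero m)] using this
  · induction p using MvPolynomial.induction_on' with
    | monomial m a =>
      refine ⟨monomial m (a / (m.degree + c)), ?_⟩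
      ext n
      rw [coeff_shift, coeff_monomial, coeff_monomial]
      split_ifs with hmn
      · rw [← hmn, mul_div_cancel₀ a (eigenvalue_ne_zero m)]
      · rw [mul_zero]
    | add p q hp hq =>
      obtain ⟨p', rfl⟩ := hp
      obtain ⟨q', rfl⟩ := hq
      exact ⟨p' + q', by simp only [map_add, smul_add]; abel⟩

end Euler

section VectorCalculus

variable {R : Type*} [CommRing R]

/-- The gradient of a polynomial, as a vector field. -/
noncomputable def grad {σ : Type*} (f : MvPolynomial σ R) : σ → MvPolynomial σ R :=
  fun i ↦ pderiv i f

/-- The divergence of a polynomial vector field. -/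
noncomputable def divergence {σ : Type*} [Fintype σ] :
    (σ → MvPolynomial σ R) →ₗ[R] MvPolynomial σ R where
  toFun V := ∑ i, pderiv i (V i)
  map_add' V W := by simp only [Pi.add_apply, map_add, Finset.sum_add_distrib]
  map_smul' c V := by simp [Finset.smul_sum]

theorem divergence_apply {σ : Type*} [Fintype σ] (V : σ → MvPolynomial σ R) :
    divergence V = ∑ i, pderiv i (V i) :=
  rfl

/-- The curl of a polynomial vector field in three variables, i.e. the exterior derivative of the
corresponding 1-form. -/
noncomputable def curl :
    (Fin 3 → MvPolynomial (Fin 3) R) →ₗ[R] (Fin 3 → MvPolynomial (Fin 3) R) where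
  toFun V := ![pderiv 1 (V 2) - pderiv 2 (V 1), pderiv 2 (V 0) - pderiv 0 (V 2),
    pderiv 0 (V 1) - pderiv 1 (V 0)]
  map_add' V W := by
    ext i : 1
    fin_cases i <;>
      simp only [Pi.add_apply, map_add, Fin.zero_eta, Fin.mk_one, Fin.reduceFinMk,
        Matrix.cons_val] <;>
      ring
  map_smul' c V := by
    ext i : 1
    fin_cases i <;> simp [smul_sub]

theorem curl_apply (V : Fin 3 → MvPolynomial (Fin 3) R) :
    curl V = ![pderiv 1 (V 2) - pderiv 2 (V 1), pderiv 2 (V 0) - pderiv 0 (V 2),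
      pderiv 0 (V 1) - pderiv 1 (V 0)] :=
  rfl

theorem grad_X {σ : Type*} [DecidableEq σ] (i : σ) :
    grad (X i : MvPolynomial σ R) = Pi.single i 1 := by
  ext1 j
  rw [grad, pderiv_X, Pi.single_comm]

theorem euler_comp_grad_add_grad {σ : Type*} {f : MvPolynomial σ R} {d : ℕ}
    (hf : f.IsHomogeneous d) : euler ∘ grad f + grad f = d • grad f := by
  ext1 i
  simp only [grad, Pi.add_apply, Function.comp_apply, Pi.smul_apply, ← pderiv_euler,
    euler_eq_nsmul_of_isHomogeneous hf, map_nsmul]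

section AnyDimension

variable {σ : Type*} [Fintype σ]

theorem divergence_smul (g : MvPolynomial σ R) (V : σ → MvPolynomial σ R) :
    divergence (g • V) = grad g ⬝ᵥ V + g * divergence V := by
  simp only [divergence_apply, grad, dotProduct, Pi.smul_apply, smul_eq_mul, pderiv_mul,
    Finset.sum_add_distrib, Finset.mul_sum]

theorem divergence_X : divergence (X : σ → MvPolynomial σ R) = Fintype.card σ := by
  simp [divergence_apply]

theorem grad_dotProduct_X (p : MvPolynomial σ R) : grad p ⬝ᵥ X = euler p := by
  simp only [euler_apply, dotProduct, grad, mul_comm]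

theorem euler_dotProduct (V W : σ → MvPolynomial σ R) :
    euler (V ⬝ᵥ W) = (euler ∘ V) ⬝ᵥ W + V ⬝ᵥ (euler ∘ W) := by
  simp only [dotProduct, map_sum, Derivation.leibniz, smul_eq_mul, Function.comp_apply,
    ← Finset.sum_add_distrib]
  exact Finset.sum_congr rfl fun i _ ↦ by ring

end AnyDimension

theorem divergence_curl (V : Fin 3 → MvPolynomial (Fin 3) R) : divergence (curl V) = 0 := by
  simp only [divergence_apply, curl_apply, Fin.sum_univ_three, Matrix.cons_val, map_sub,
    pderiv_comm (1 : Fin 3) 0, pderiv_comm (2 : Fin 3) _]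
  ring

theorem divergence_grad_cross (g : MvPolynomial (Fin 3) R) (W : Fin 3 → MvPolynomial (Fin 3) R) :
    divergence (grad g ⨯₃ W) = -(grad g ⬝ᵥ curl W) := by
  simp only [divergence_apply, curl_apply, grad, cross_apply, Matrix.vec3_dotProduct,
    Fin.sum_univ_three, Matrix.cons_val, map_sub, pderiv_mul,
    pderiv_comm (1 : Fin 3) 0, pderiv_comm (2 : Fin 3) _]
  ring

theorem curl_cross_X (V : Fin 3 → MvPolynomial (Fin 3) R) :
    curl (V ⨯₃ X) = 2 • V - divergence V • X + euler ∘ V := by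
  ext i : 1
  fin_cases i <;>
    simp [curl_apply, cross_apply, divergence_apply, Fin.sum_univ_three, pderiv_X,
      euler_apply] <;>
    ring

theorem curl_euler_comp (V : Fin 3 → MvPolynomial (Fin 3) R) :
    curl (euler ∘ V) = euler ∘ curl V + curl V := by
  ext i : 1
  fin_cases i <;>
    simp only [curl_apply, pderiv_euler, Function.comp_apply, Pi.add_apply, map_sub, Fin.zero_eta,
      Fin.mk_one, Fin.reduceFinMk, Matrix.cons_val] <;>
    ring

end VectorCalculus

section Brieskorn

/-- The space `E_f = {∇f ⬝ curl V}` of coefficients of the 3-forms `df ∧ dω`, whose quotient is the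
Brieskorn module of `f`. -/
noncomputable def brieskornSubmodule {R : Type*} [CommRing R] (f : MvPolynomial (Fin 3) R) :
    Submodule R (MvPolynomial (Fin 3) R) :=
  LinearMap.range (dotProductBilin R R (grad f) ∘ₗ curl)

theorem mem_brieskornSubmodule {R : Type*} [CommRing R] {f g : MvPolynomial (Fin 3) R} :
    g ∈ brieskornSubmodule f ↔ ∃ V, grad f ⬝ᵥ curl V = g :=
  Iff.rfl

theorem emem_iff_mem_brieskornSubmodule {f g : MvPolynomial (Fin 3) ℂ} :
    Emem f g ↔ g ∈ brieskornSubmodule f := by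
  rw [mem_brieskornSubmodule]
  constructor
  · rintro ⟨P, Q, R, rfl⟩
    exact ⟨![P, Q, R], by simp only [curl_apply, grad, Matrix.vec3_dotProduct, Matrix.cons_val]⟩
  · rintro ⟨V, rfl⟩
    exact ⟨V 0, V 1, V 2, by simp only [curl_apply, grad, Matrix.vec3_dotProduct, Matrix.cons_val]⟩

theorem mem_span_range_of_mem_brieskornSubmodule {R : Type*} [CommRing R]
    {f g : MvPolynomial (Fin 3) R} (hg : g ∈ brieskornSubmodule f) :
    g ∈ Ideal.span (Set.range (grad f)) := by
  obtain ⟨V, rfl⟩ := mem_brieskornSubmodule.1 hg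
  exact Ideal.mem_span_range_iff_exists_fun.2 ⟨curl V, dotProduct_comm _ _⟩

variable {R : Type*} [CommRing R] {f : MvPolynomial (Fin 3) R} {d : ℕ}

theorem grad_dotProduct_curl_cross_X (hf : f.IsHomogeneous d)
    {V : Fin 3 → MvPolynomial (Fin 3) R} (hV : grad f ⬝ᵥ V = 0) :
    grad f ⬝ᵥ curl (V ⨯₃ X) = -(d • (f * divergence V)) := by
  have grad_dotProduct_euler : grad f ⬝ᵥ (euler ∘ V) = 0 := by
    have h := congrArg (· ⬝ᵥ V) (euler_comp_grad_add_grad hf)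
    have h' := euler_dotProduct (grad f) V
    simp only [add_dotProduct, smul_dotProduct, hV, smul_zero, add_zero, map_zero] at h h'
    rw [h, zero_add] at h'
    exact h'.symm
  rw [curl_cross_X, dotProduct_add, dotProduct_sub, dotProduct_smul, dotProduct_smul, hV,
    grad_dotProduct_X, grad_dotProduct_euler, euler_eq_nsmul_of_isHomogeneous hf]
  simp only [smul_eq_mul, nsmul_eq_mul]
  ring

theorem euler_grad_dotProduct_curl (hf : f.IsHomogeneous d) (V : Fin 3 → MvPolynomial (Fin 3) R) :
    euler (grad f ⬝ᵥ curl V) + 3 • (grad f ⬝ᵥ curl V) =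
      grad f ⬝ᵥ curl (euler ∘ V + (d + 1) • V) := by
  have h := congrArg (· ⬝ᵥ curl V) (euler_comp_grad_add_grad hf)
  simp only [add_dotProduct, smul_dotProduct] at h
  rw [euler_dotProduct, map_add, map_nsmul, curl_euler_comp, dotProduct_add, dotProduct_add,
    dotProduct_smul, eq_sub_of_add_eq h]
  module

section Field

variable {K : Type*} [Field K] [CharZero K] {f g : MvPolynomial (Fin 3) K} {d : ℕ}

theorem mul_divergence_mem_brieskornSubmodule (hd : d ≠ 0) (hf : f.IsHomogeneous d)
    {V : Fin 3 → MvPolynomial (Fin 3) K} (hV : grad f ⬝ᵥ V = 0) :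
    f * divergence V ∈ brieskornSubmodule f := by
  rw [← (brieskornSubmodule f).smul_mem_iff (Nat.cast_ne_zero (R := K).2 hd),
    ← Submodule.neg_mem_iff, Nat.cast_smul_eq_nsmul, ← grad_dotProduct_curl_cross_X hf hV]
  exact mem_brieskornSubmodule.2 ⟨_, rfl⟩

theorem mem_brieskornSubmodule_of_euler_add_mem (hf : f.IsHomogeneous d)
    (hg : euler g + 3 • g ∈ brieskornSubmodule f) : g ∈ brieskornSubmodule f := by
  obtain ⟨V, hV⟩ := mem_brieskornSubmodule.1 hg
  choose W hW using fun i ↦ (euler_add_nsmul_bijective d.succ_ne_zero).surjective (V i)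
  have hWV : euler ∘ W + (d + 1) • W = V := funext hW
  refine mem_brieskornSubmodule.2 ⟨W, (euler_add_nsmul_bijective three_ne_zero).injective ?_⟩
  simp only [euler_grad_dotProduct_curl hf, hWV, hV]

end Field

end Brieskorn

section KoszulExact

/-- Exactness of the Koszul complex of three elements in degree 1: every syzygy is a combination of
the trivial ones `Fᵢ eⱼ - Fⱼ eᵢ`. -/
def KoszulExact {S : Type*} [CommRing S] (F : Fin 3 → S) : Prop :=
  ∀ V, F ⬝ᵥ V = 0 → ∃ W, V = F ⨯₃ W

variable {K : Type*} [Field K] [CharZero K] {f g : MvPolynomial (Fin 3) K} {d : ℕ}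

theorem mem_brieskornSubmodule_of_mul_mem (hf : f.IsHomogeneous d) (hkoszul : KoszulExact (grad f))
    (hg : f * g ∈ brieskornSubmodule f) : g ∈ brieskornSubmodule f := by
  obtain ⟨V, hV⟩ := mem_brieskornSubmodule.1 hg
  have isSyzygy : grad f ⬝ᵥ (g • X - d • curl V) = 0 := by
    rw [dotProduct_sub, dotProduct_smul, dotProduct_smul, grad_dotProduct_X,
      euler_eq_nsmul_of_isHomogeneous hf, hV, smul_eq_mul, mul_smul_comm, mul_comm, sub_self]
  obtain ⟨W, hW⟩ := hkoszul _ isSyzygy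
  have divergence_syzygy : divergence (g • X - d • curl V) = euler g + 3 • g := by
    rw [map_sub, map_nsmul, divergence_curl, divergence_smul, divergence_X,
      grad_dotProduct_X]
    simp [mul_comm]
  refine mem_brieskornSubmodule_of_euler_add_mem hf (mem_brieskornSubmodule.2 ⟨-W, ?_⟩)
  rw [← divergence_syzygy, hW, divergence_grad_cross, map_neg, dotProduct_neg]

theorem mem_brieskornSubmodule_of_pow_mul_mem (hf : f.IsHomogeneous d)
    (hkoszul : KoszulExact (grad f)) (k : ℕ) (hg : f ^ k * g ∈ brieskornSubmodule f) :
    g ∈ brieskornSubmodule f := by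
  induction k with
  | zero => simpa using hg
  | succ k ih =>
    rw [pow_succ', mul_assoc] at hg
    exact ih (mem_brieskornSubmodule_of_mul_mem hf hkoszul hg)

end KoszulExact

theorem koszulExact_of_isWeaklyRegular {S : Type*} [CommRing S] {F a : Fin 3 → S}
    (hreg : RingTheory.Sequence.IsWeaklyRegular S [a 0, a 1, a 2])
    (ha : ∀ k, a k ∈ Ideal.span (Set.range F)) : KoszulExact F := by
  -- With `s 0` chosen so that `F ⬝ᵥ s 0 = a 0`, the field `V ⨯₃ s 0` is a Koszul witness for
  -- `a 0 • V`; regularity makes it divisible by `a 0` modulo multiples of `F`.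
  intro V hV
  obtain ⟨cancel₀, cancel₁, cancel₂⟩ :
      (∀ x, a 0 * x = 0 → x = 0) ∧
      (∀ x, a 1 * x ∈ Ideal.span {a 0} → x ∈ Ideal.span {a 0}) ∧
      (∀ x, a 2 * x ∈ Ideal.span {a 0, a 1} → x ∈ Ideal.span {a 0, a 1}) := by
    simpa [RingTheory.Sequence.isWeaklyRegular_iff_Fin, Fin.forall_fin_succ,
      isSMulRegular_quotient_iff_mem_of_smul_mem, Ideal.span_insert] using hreg
  choose s hs using fun k ↦ Ideal.mem_span_range_iff_exists_fun.1 (ha k)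
  replace hs (k) : F ⬝ᵥ s k = a k := (dotProduct_comm _ _).trans (hs k)
  set W := V ⨯₃ s 0
  set c := W ⬝ᵥ s 1
  have cross_W : F ⨯₃ W = a 0 • V := by
    rw [cross_cross_eq_smul_sub_smul', hs, dotProduct_comm V, hV, zero_smul, sub_zero]
  have smul_W : a 1 • W = c • F + a 0 • (V ⨯₃ s 1) := by
    have := cross_cross_eq_smul_sub_smul F W (s 1)
    rw [cross_W, map_smul, LinearMap.smul_apply, hs] at this
    exact sub_eq_iff_eq_add'.1 this.symm
  have c_mem : c ∈ Ideal.span {a 0, a 1} := by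
    refine cancel₂ c (Ideal.mem_span_pair.2 ⟨-(V ⨯₃ s 1 ⬝ᵥ s 2), W ⬝ᵥ s 2, ?_⟩)
    have := congrArg (· ⬝ᵥ s 2) smul_W
    simp only [add_dotProduct, smul_dotProduct, hs, smul_eq_mul] at this
    linear_combination this
  obtain ⟨u, v, huv⟩ := Ideal.mem_span_pair.1 c_mem
  have W_sub_mem (i) : W i - v * F i ∈ Ideal.span {a 0} := by
    refine cancel₁ _ (Ideal.mem_span_singleton.2 ⟨u * F i + (V ⨯₃ s 1) i, ?_⟩)
    have := congrFun smul_W i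
    simp only [Pi.add_apply, Pi.smul_apply, smul_eq_mul, ← huv] at this
    linear_combination this
  choose G hG using fun i ↦ Ideal.mem_span_singleton'.1 (W_sub_mem i)
  have W_eq : W = v • F + a 0 • G := by
    ext i
    simp only [Pi.add_apply, Pi.smul_apply, smul_eq_mul]
    linear_combination -hG i
  refine ⟨G, funext fun i ↦ sub_eq_zero.1 (cancel₀ _ ?_)⟩
  have := congrFun cross_W i
  simp only [W_eq, map_add, map_smul, cross_self, smul_zero, zero_add, Pi.smul_apply,
    smul_eq_mul] at this
  linear_combination -this

section Monomials

variable {σ R : Type*} [CommRing R]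

theorem isSMulRegular_quotient_ofList_X_pow (n : σ → ℕ) {L : List σ} {i : σ} (hi : i ∉ L) :
    IsSMulRegular (MvPolynomial σ R ⧸ Ideal.ofList (L.map fun j ↦ (X j : MvPolynomial σ R) ^ n j))
      (X i ^ n i : MvPolynomial σ R) := by
  classical
  have ofList_eq : Ideal.ofList (L.map fun j ↦ (X j : MvPolynomial σ R) ^ n j) =
      Ideal.span ((fun m ↦ monomial m (1 : R)) ''
        ((fun j ↦ Finsupp.single j (n j)) '' {j | j ∈ L})) := by
    rw [Set.image_image, Ideal.ofList]
    congr 1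
    ext p
    simp [X_pow_eq_monomial]
  rw [isSMulRegular_quotient_iff_mem_of_smul_mem, ofList_eq]
  intro p hp
  rw [mem_ideal_span_monomial_image] at hp ⊢
  intro m hm
  have shifted_mem : Finsupp.single i (n i) + m ∈ (X i ^ n i * p).support := by
    rwa [mem_support_iff, X_pow_eq_monomial, coeff_monomial_mul, one_mul, ← mem_support_iff]
  obtain ⟨_, ⟨j, hj, rfl⟩, hle⟩ := hp _ shifted_mem
  have hij : j ≠ i := fun h ↦ hi (h ▸ hj)
  refine ⟨_, ⟨j, hj, rfl⟩, ?_⟩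
  simpa [Finsupp.single_le_iff, hij] using hle

theorem isWeaklyRegular_X_pow (n : σ → ℕ) {L : List σ} (hL : L.Nodup) :
    RingTheory.Sequence.IsWeaklyRegular (MvPolynomial σ R)
      (L.map fun i ↦ (X i : MvPolynomial σ R) ^ n i) := by
  refine ⟨fun k hk ↦ ?_⟩
  rw [List.length_map] at hk
  rw [List.getElem_map, ← List.map_take, smul_eq_mul, Ideal.mul_top]
  exact isSMulRegular_quotient_ofList_X_pow n fun mem_take ↦
    List.disjoint_take_drop hL le_rfl mem_take (by
      rw [List.drop_eq_getElem_cons hk]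
      exact List.mem_cons_self)

end Monomials

theorem exists_X_pow_mem_span_range {σ ι K : Type*} [Finite σ] [Field K] [IsAlgClosed K]
    {F : ι → MvPolynomial σ K} (hF : ∀ p : σ → K, (∀ i, eval p (F i) = 0) → p = 0) (j : σ) :
    ∃ n : ℕ, X j ^ n ∈ Ideal.span (Set.range F) := by
  change X j ∈ (Ideal.span (Set.range F)).radical
  rw [← vanishingIdeal_zeroLocus_eq_radical (K := K), mem_vanishingIdeal_iff]
  intro p hp
  rw [mem_zeroLocus_iff] at hp
  have hp0 : p = 0 := hF p fun i ↦ by simpa using hp _ (Ideal.subset_span ⟨i, rfl⟩)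
  simp [hp0]

theorem koszulExact_of_forall_eval_eq_zero {K : Type*} [Field K] [IsAlgClosed K]
    {F : Fin 3 → MvPolynomial (Fin 3) K}
    (hF : ∀ p : Fin 3 → K, (∀ i, eval p (F i) = 0) → p = 0) : KoszulExact F := by
  choose n hn using exists_X_pow_mem_span_range hF
  exact koszulExact_of_isWeaklyRegular
    (isWeaklyRegular_X_pow n (L := [0, 1, 2]) (by decide)) hn

section LechIndependent

/-- Lech independence of a family `F`: the coefficients of every syzygy of `F` lie in the ideal
`J = (F)`, i.e. the classes of the `F i` form a basis of `J / J²` over `S / J`. -/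
def LechIndependent {S ι : Type*} [CommRing S] [Fintype ι] (F : ι → S) : Prop :=
  ∀ a : ι → S, F ⬝ᵥ a = 0 → ∀ i, a i ∈ Ideal.span (Set.range F)

theorem lechIndependent_of_divergence_mem {σ R : Type*} [CommRing R] [Fintype σ]
    {F : σ → MvPolynomial σ R}
    (hF : ∀ V, F ⬝ᵥ V = 0 → divergence V ∈ Ideal.span (Set.range F)) : LechIndependent F := by
  classical
  intro V hV i
  have divergence_X_smul :
      divergence ((X i : MvPolynomial σ R) • V) = V i + X i * divergence V := by
    rw [divergence_smul, grad_X, single_one_dotProduct]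
  have := hF ((X i : MvPolynomial σ R) • V) (by rw [dotProduct_smul, hV, smul_zero])
  rw [divergence_X_smul] at this
  exact (Ideal.add_mem_iff_left _ (Ideal.mul_mem_left _ _ (hF V hV))).1 this

theorem lechIndependent_grad {K : Type*} [Field K] [CharZero K] {f : MvPolynomial (Fin 3) K}
    {d : ℕ} (hd : d ≠ 0) (hf : f.IsHomogeneous d)
    (htf : ∀ g, f * g ∈ brieskornSubmodule f → g ∈ brieskornSubmodule f) :
    LechIndependent (grad f) :=
  lechIndependent_of_divergence_mem fun _ hV ↦ mem_span_range_of_mem_brieskornSubmodule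
    (htf _ (mul_divergence_mem_brieskornSubmodule hd hf hV))

variable {S ι : Type*} [CommRing S] [Fintype ι] {F : ι → S}

theorem LechIndependent.ne_zero (hF : LechIndependent F) (htop : Ideal.span (Set.range F) ≠ ⊤)
    (i : ι) : F i ≠ 0 := by
  classical
  intro hi
  have := hF (Pi.single i 1) (by rw [dotProduct_single, hi, zero_mul]) i
  rw [Pi.single_eq_same] at this
  exact htop ((Ideal.eq_top_iff_one _).2 this)

theorem LechIndependent.mem_of_mul_mem_smul_span (hF : LechIndependent F) {P : Ideal S}
    (hP : Ideal.span (Set.range F) ≤ P) {κ : S} {i : ι}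
    (hκ : κ * F i ∈ P • Ideal.span (Set.range F)) : κ ∈ P := by
  classical
  obtain ⟨m, hm, hmκ⟩ := (Submodule.mem_ideal_smul_span_iff_exists_sum _ _ _).1 hκ
  have := hP (hF (Pi.single i κ - ⇑m) (by
    rw [dotProduct_sub, dotProduct_single, mul_comm, ← hmκ, Finsupp.sum_fintype _ _ (by simp),
      sub_eq_zero, dotProduct_comm]
    rfl) i)
  rw [Pi.sub_apply, Pi.single_eq_same] at this
  exact (Submodule.sub_mem_iff_left P (hm i)).1 this

theorem LechIndependent.isUnit_of_forall_dvd [IsDomain S] [Nontrivial ι] (hF : LechIndependent F)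
    {π : S} (hπ : ∀ i, π ∣ F i) : IsUnit π := by
  classical
  by_cases htop : Ideal.span (Set.range F) = ⊤
  · have le_span : Ideal.span (Set.range F) ≤ Ideal.span {π} :=
      Ideal.span_le.2 (Set.range_subset_iff.2 fun i ↦ Ideal.mem_span_singleton.2 (hπ i))
    rwa [htop, top_le_iff, Ideal.span_singleton_eq_top] at le_span
  choose F' hF' using hπ
  set J' := Ideal.span (Set.range F')
  have F'_mem (j) : F' j ∈ Ideal.span (Set.range F) := by
    obtain ⟨i, hij⟩ := exists_ne j
    have := hF (Pi.single i (F' j) - Pi.single j (F' i)) (by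
      rw [dotProduct_sub, dotProduct_single, dotProduct_single, hF' i, hF' j]
      ring) i
    rwa [Pi.sub_apply, Pi.single_eq_same, Pi.single_eq_of_ne hij, sub_zero] at this
  have span_le : Ideal.span (Set.range F) ≤ Ideal.span {π} • J' := by
    refine Ideal.span_le.2 (Set.range_subset_iff.2 fun i ↦ ?_)
    rw [hF' i]
    exact Submodule.smul_mem_smul (Ideal.mem_span_singleton_self π)
      (Ideal.subset_span (Set.mem_range_self i))
  have le_smul : J' ≤ Ideal.span {π} • J' :=
    Ideal.span_le.2 (Set.range_subset_iff.2 fun j ↦ span_le (F'_mem j))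
  obtain ⟨r, hr, r_smul⟩ := Submodule.exists_sub_one_mem_and_smul_eq_zero_of_fg_of_le_smul _ _
    (Submodule.fg_span (Set.finite_range F')) le_smul
  obtain ⟨i⟩ : Nonempty ι := inferInstance
  have F'_ne_zero : F' i ≠ 0 := right_ne_zero_of_mul (hF' i ▸ hF.ne_zero htop i)
  have r_eq_zero : r = 0 :=
    (mul_eq_zero.1 (r_smul _ (Ideal.subset_span (Set.mem_range_self i)))).resolve_right F'_ne_zero
  rw [r_eq_zero, zero_sub, Ideal.neg_mem_iff, Ideal.mem_span_singleton] at hr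
  exact isUnit_of_dvd_one hr

theorem LechIndependent.add_single_mul [DecidableEq ι] (hF : LechIndependent F) {i j : ι}
    (hij : i ≠ j) (c : S) : LechIndependent (F + Pi.single i (c * F j)) := by
  intro a ha
  set J := Ideal.span (Set.range (F + Pi.single i (c * F j)))
  have mem_J (k) : F k + (Pi.single i (c * F j) : ι → S) k ∈ J :=
    Ideal.subset_span (Set.mem_range_self k)
  have F_mem_of_ne {k} (hk : k ≠ i) : F k ∈ J := by
    simpa only [Pi.single_eq_of_ne hk, add_zero] using mem_J k
  have span_le : Ideal.span (Set.range F) ≤ J := by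
    refine Ideal.span_le.2 (Set.range_subset_iff.2 fun k ↦ ?_)
    obtain rfl | hk := eq_or_ne k i
    · have := mem_J k
      rw [Pi.single_eq_same] at this
      exact (Ideal.add_mem_iff_left _ (J.mul_mem_left c (F_mem_of_ne hij.symm))).1 this
    · exact F_mem_of_ne hk
  have shifted_mem (k) : (a + Pi.single j (c * a i) : ι → S) k ∈ J := by
    refine span_le (hF _ ?_ k)
    rw [add_dotProduct, single_dotProduct] at ha
    rw [dotProduct_add, dotProduct_single, ← ha]
    ring
  have a_i_mem : a i ∈ J := by
    simpa only [Pi.add_apply, Pi.single_eq_of_ne hij, add_zero] using shifted_mem i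
  intro k
  obtain rfl | hk := eq_or_ne k j
  · have := shifted_mem k
    rw [Pi.add_apply, Pi.single_eq_same] at this
    exact (Ideal.add_mem_iff_left _ (J.mul_mem_left c a_i_mem)).1 this
  · simpa only [Pi.add_apply, Pi.single_eq_of_ne hk, add_zero] using shifted_mem k

end LechIndependent

section HeightTwo

variable {S : Type*} [CommRing S] [IsDomain S]

theorem exists_isRelPrime_add_smul [UniqueFactorizationMonoid S] (K : Type*) [Field K] [Infinite K]
    [Algebra K S] {a b c : S} (ha : a ≠ 0) (habc : ∀ π, π ∣ a → π ∣ b → π ∣ c → IsUnit π) :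
    ∃ t : K, IsRelPrime a (b + t • c) := by
  classical
  by_contra! not_isRelPrime
  have exists_factor (t : K) : ∃ π : (UniqueFactorizationMonoid.factors a).toFinset,
      π.1 ∣ b + t • c := by
    have := not_isRelPrime t
    rw [UniqueFactorizationMonoid.isRelPrime_iff_no_prime_factors ha] at this
    push Not at this
    obtain ⟨ϖ, ϖ_dvd_a, ϖ_dvd, hϖ⟩ := this
    obtain ⟨π, hπ, hϖπ⟩ := UniqueFactorizationMonoid.exists_mem_factors_of_dvd ha hϖ.irreducible
      ϖ_dvd_a
    exact ⟨⟨π, Multiset.mem_toFinset.2 hπ⟩, hϖπ.symm.dvd.trans ϖ_dvd⟩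
  choose φ hφ using exists_factor
  obtain ⟨t, t', ht, hφt⟩ := Finite.exists_ne_map_eq_of_infinite φ
  have mem_factors := Multiset.mem_toFinset.1 (φ t).2
  have dvd_c : (φ t).1 ∣ c := by
    have := dvd_sub (hφ t) (hφt ▸ hφ t')
    rw [add_sub_add_left_eq_sub, ← sub_smul] at this
    simpa [smul_smul, inv_mul_cancel₀ (sub_ne_zero.2 ht)] using
      dvd_smul_of_dvd (t - t')⁻¹ this
  have dvd_b : (φ t).1 ∣ b := (dvd_add_left (dvd_smul_of_dvd t dvd_c)).1 (hφ t)
  exact (UniqueFactorizationMonoid.prime_of_factor _ mem_factors).not_isUnit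
    (habc _ (UniqueFactorizationMonoid.dvd_of_mem_factors mem_factors) dvd_b dvd_c)

theorem two_le_height_of_isRelPrime [UniqueFactorizationMonoid S] {u v : S}
    (huv : IsRelPrime u v) {Q : Ideal S} [hQ : Q.IsPrime] (hu : u ∈ Q) (hv : v ∈ Q) :
    2 ≤ Q.height := by
  have u_ne_zero : u ≠ 0 := by
    rintro rfl
    exact hQ.ne_top (Q.eq_top_of_isUnit_mem hv (isRelPrime_zero_left.1 huv))
  obtain ⟨π, hπQ, hπ, hπu⟩ : ∃ π ∈ Q, Prime π ∧ π ∣ u := by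
    obtain ⟨s, hs, hsu⟩ := UniqueFactorizationMonoid.exists_prime_factors u u_ne_zero
    obtain ⟨π, hπs, hπQ⟩ := (hQ.multiset_prod_mem_iff_exists_mem s).1
      (Q.mem_of_dvd hsu.symm.dvd hu)
    exact ⟨π, hπQ, hs π hπs, (Multiset.dvd_prod hπs).trans hsu.dvd⟩
  have := (Ideal.span_singleton_prime hπ.ne_zero).2 hπ
  have bot_lt : (⊥ : Ideal S) < Ideal.span {π} :=
    bot_lt_iff_ne_bot.2 fun h ↦ hπ.ne_zero (Ideal.span_singleton_eq_bot.1 h)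
  have lt_Q : Ideal.span {π} < Q := by
    refine lt_of_le_of_ne ((Ideal.span_singleton_le_iff_mem Q).2 hπQ) fun h ↦ ?_
    rw [← h, Ideal.mem_span_singleton] at hv
    exact hπ.not_isUnit (huv hπu hv)
  calc (2 : ℕ∞) = (⊥ : Ideal S).height + 1 + 1 := by rw [Ideal.height_bot]; norm_num
    _ ≤ (Ideal.span {π}).height + 1 := by
      gcongr
      exact Ideal.height_add_one_le_of_lt_of_isPrime bot_lt
    _ ≤ Q.height := Ideal.height_add_one_le_of_lt_of_isPrime lt_Q

theorem exists_forall_mem_iff_mul_mem_span_pair [UniqueFactorizationMonoid S] [IsNoetherianRing S]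
    {P : Ideal S} [hP : P.IsPrime] (hheight : P.height ≤ 2) {u v w : S} (huv : IsRelPrime u v)
    (hle : (Ideal.span {u, v}).colon {w} ≤ P) :
    ∃ t, ∀ r, r ∈ P ↔ r * (t * w) ∈ Ideal.span {u, v} := by
  set I := (Ideal.span {u, v}).colon {w}
  have span_le : Ideal.span {u, v} ≤ I := fun r hr ↦
    Submodule.mem_colon_singleton.2 (Ideal.mul_mem_right _ _ hr)
  have P_mem_minimalPrimes : P ∈ I.minimalPrimes := by
    refine ⟨⟨hP, hle⟩, fun Q ⟨hQ, hIQ⟩ hQP ↦ ?_⟩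
    by_contra hPQ
    have height_P := Ideal.height_add_one_le_of_lt_of_isPrime (lt_of_le_not_ge hQP hPQ)
    have height_Q := two_le_height_of_isRelPrime huv (hIQ (span_le (Ideal.subset_span (by simp))))
      (hIQ (span_le (Ideal.subset_span (by simp))))
    exact absurd ((add_le_add_left height_Q 1).trans (height_P.trans hheight)) (by decide)
  obtain ⟨t, ht⟩ : ∃ t : S, P = I.colon {t} := by
    apply Submodule.exists_eq_colon_of_mem_minimalPrimes (x := (1 : S))
    convert P_mem_minimalPrimes using 2
    ext r
    rw [Submodule.mem_colon_singleton, smul_eq_mul, mul_one]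
  refine ⟨t, fun r ↦ ?_⟩
  rw [ht, Submodule.mem_colon_singleton, Submodule.mem_colon_singleton, smul_eq_mul, smul_eq_mul,
    mul_assoc]

theorem exists_notMem_det_eq [DecompositionMonoid S] {l₁ l₂ u v s a₀ a₁ b₀ b₁ : S}
    (hprime : (Ideal.span {l₁, l₂}).IsPrime) (huv : IsRelPrime u v)
    (hu : u ∈ Ideal.span {l₁, l₂}) (hv : v ∈ Ideal.span {l₁, l₂})
    (hs : s ∉ Ideal.span {u, v}) (ha : a₀ * u + a₁ * v = l₁ * s)
    (hb : b₀ * u + b₁ * v = l₂ * s) :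
    ∃ κ ∉ Ideal.span {l₁, l₂}, l₂ * a₀ - l₁ * b₀ = κ * v ∧ l₂ * a₁ - l₁ * b₁ = -(κ * u) := by
  have dvd_of_dvd_of_dvd {x y : S} (h₁ : y ∣ l₁) (h₂ : y ∣ l₂) (hx : x ∈ Ideal.span {l₁, l₂}) :
      y ∣ x := by
    obtain ⟨c₁, c₂, rfl⟩ := Ideal.mem_span_pair.1 hx
    exact dvd_add (h₁.mul_left _) (h₂.mul_left _)
  have hl : IsRelPrime l₁ l₂ := fun y h₁ h₂ ↦
    huv (dvd_of_dvd_of_dvd h₁ h₂ hu) (dvd_of_dvd_of_dvd h₁ h₂ hv)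
  have l₁_ne_zero : l₁ ≠ 0 := by
    rintro rfl
    exact hprime.ne_top (Ideal.eq_top_of_isUnit_mem _ (Ideal.subset_span (by simp))
      (isRelPrime_zero_left.1 hl))
  have v_ne_zero : v ≠ 0 := by
    rintro rfl
    exact hprime.ne_top (Ideal.eq_top_of_isUnit_mem _ hu (isRelPrime_zero_right.1 huv))
  obtain ⟨κ, hκ⟩ : v ∣ l₂ * a₀ - l₁ * b₀ := huv.symm.dvd_of_dvd_mul_right
    ⟨-(l₂ * a₁ - l₁ * b₁), by linear_combination l₂ * ha - l₁ * hb⟩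
  have hκ' : l₂ * a₁ - l₁ * b₁ = -(κ * u) := mul_right_cancel₀ v_ne_zero (by
    linear_combination l₂ * ha - l₁ * hb - u * hκ)
  refine ⟨κ, fun κ_mem ↦ hs ?_, by rw [hκ, mul_comm], hκ'⟩
  obtain ⟨k₁, k₂, hk⟩ := Ideal.mem_span_pair.1 κ_mem
  obtain ⟨e₀, he₀⟩ : l₁ ∣ a₀ - k₂ * v := hl.dvd_of_dvd_mul_left
    ⟨b₀ + k₁ * v, by linear_combination hκ - v * hk⟩
  obtain ⟨e₁, he₁⟩ : l₁ ∣ a₁ + k₂ * u := hl.dvd_of_dvd_mul_left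
    ⟨b₁ - k₁ * u, by linear_combination hκ' + u * hk⟩
  exact Ideal.mem_span_pair.2 ⟨e₀, e₁, mul_left_cancel₀ l₁_ne_zero (by
    linear_combination ha - u * he₀ - v * he₁)⟩

theorem LechIndependent.exists_notMem_of_isRelPrime [UniqueFactorizationMonoid S]
    [IsNoetherianRing S] {F : Fin 3 → S} (hF : LechIndependent F) (hrel : IsRelPrime (F 0) (F 1))
    {l₁ l₂ : S} (hprime : (Ideal.span {l₁, l₂}).IsPrime) : ∃ i, F i ∉ Ideal.span {l₁, l₂} := by
  by_contra! F_mem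
  set P := Ideal.span {l₁, l₂}
  have span_le : Ideal.span (Set.range F) ≤ P := Ideal.span_le.2 (Set.range_subset_iff.2 F_mem)
  have l₁_mem : l₁ ∈ P := Ideal.subset_span (by simp)
  have l₂_mem : l₂ ∈ P := Ideal.subset_span (by simp)
  have height_le : P.height ≤ 2 := (P.height_le_spanFinrank hprime.ne_top).trans
    ((Submodule.spanFinrank_span_le_encard _).trans ((Set.encard_insert_le _ _).trans
      (by rw [Set.encard_singleton, one_add_one_eq_two])))
  have colon_le : (Ideal.span {F 0, F 1}).colon {F 2} ≤ P := by
    intro r hr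
    obtain ⟨a, b, hab⟩ := Ideal.mem_span_pair.1 (Submodule.mem_colon_singleton.1 hr)
    refine span_le (neg_mem_iff.1 (hF ![a, b, -r] ?_ 2))
    rw [Matrix.vec3_dotProduct]
    simp only [Matrix.cons_val, smul_eq_mul] at hab ⊢
    linear_combination hab
  obtain ⟨t, ht⟩ := exists_forall_mem_iff_mul_mem_span_pair height_le hrel colon_le
  have socle_notMem : t * F 2 ∉ Ideal.span {F 0, F 1} := fun h ↦
    hprime.ne_top ((Ideal.eq_top_iff_one P).2 ((ht 1).2 (by rwa [one_mul])))
  have exists_coeff {l : S} (hl : l ∈ P) : ∃ a b, a * F 0 + b * F 1 = l * (t * F 2) ∧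
      b ∈ Ideal.span (Set.range F) := by
    obtain ⟨a, b, hab⟩ := Ideal.mem_span_pair.1 ((ht l).1 hl)
    refine ⟨a, b, hab, hF ![a, b, -(l * t)] ?_ 1⟩
    rw [Matrix.vec3_dotProduct]
    simp only [Matrix.cons_val]
    linear_combination hab
  obtain ⟨a₀, a₁, ha, ha₁⟩ := exists_coeff l₁_mem
  obtain ⟨b₀, b₁, hb, hb₁⟩ := exists_coeff l₂_mem
  obtain ⟨κ, hκ, -, hκF⟩ :=
    exists_notMem_det_eq hprime hrel (F_mem 0) (F_mem 1) socle_notMem ha hb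
  refine hκ (hF.mem_of_mul_mem_smul_span span_le (i := 0) ?_)
  rw [← neg_mem_iff, ← hκF]
  exact Submodule.sub_mem _ (Submodule.smul_mem_smul l₂_mem ha₁)
    (Submodule.smul_mem_smul l₁_mem hb₁)

theorem LechIndependent.exists_notMem [UniqueFactorizationMonoid S] [IsNoetherianRing S]
    (K : Type*) [Field K] [Infinite K] [Algebra K S] {F : Fin 3 → S} (hF : LechIndependent F)
    {l₁ l₂ : S} (hprime : (Ideal.span {l₁, l₂}).IsPrime) : ∃ i, F i ∉ Ideal.span {l₁, l₂} := by
  by_contra! F_mem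
  have span_ne_top : Ideal.span (Set.range F) ≠ ⊤ :=
    ne_top_of_le_ne_top hprime.ne_top (Ideal.span_le.2 (Set.range_subset_iff.2 F_mem))
  obtain ⟨c, hc⟩ := exists_isRelPrime_add_smul K (b := F 1) (c := F 2) (hF.ne_zero span_ne_top 0)
    fun π h₀ h₁ h₂ ↦ hF.isUnit_of_forall_dvd (Fin.forall_fin_succ.2 ⟨h₀, by
      simpa [Fin.forall_fin_succ] using ⟨h₁, h₂⟩⟩)
  obtain ⟨i, hi⟩ := (hF.add_single_mul (i := 1) (j := 2) (by decide) (algebraMap K S c)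
    ).exists_notMem_of_isRelPrime (by simpa [Algebra.smul_def] using hc) hprime
  refine hi (Ideal.add_mem _ (F_mem i) ?_)
  obtain rfl | h := eq_or_ne i 1
  · simpa using Ideal.mul_mem_left _ _ (F_mem 2)
  · simp [h]

end HeightTwo

section Lines

variable {σ R : Type*} [CommRing R]

/-- The ideal of the polynomials vanishing identically on the line through `0` and `p`, as the
kernel of the restriction to the parametrised line `t ↦ t • p`. -/
noncomputable def lineIdeal (p : σ → R) : Ideal (MvPolynomial σ R) :=
  RingHom.ker (aeval (R := R) fun i ↦ Polynomial.C (p i) * Polynomial.X)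

theorem isPrime_lineIdeal [IsDomain R] (p : σ → R) : (lineIdeal p).IsPrime :=
  RingHom.ker_isPrime _

theorem mem_lineIdeal_of_isHomogeneous {g : MvPolynomial σ R} {n : ℕ} (hg : g.IsHomogeneous n)
    {p : σ → R} (hp : eval p g = 0) : g ∈ lineIdeal p := by
  have restriction_eq : aeval (fun i ↦ Polynomial.C (p i) * Polynomial.X) g =
      Polynomial.C (eval p g) * Polynomial.X ^ n := by
    rw [aeval_def, eval₂_eq, eval_eq, map_sum, Finset.sum_mul]
    refine Finset.sum_congr rfl fun m hm ↦ ?_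
    have degree_eq : ∑ j ∈ m.support, m j = n := (hg.degree_eq_sum_deg_support hm).symm
    simp only [mul_pow, Finset.prod_mul_distrib, Finset.prod_pow_eq_pow_sum, degree_eq,
      Polynomial.algebraMap_eq, map_mul, map_prod, map_pow, mul_assoc]
  rw [lineIdeal, RingHom.mem_ker, restriction_eq, hp, Polynomial.C_0, zero_mul]

theorem lineIdeal_eq_span {K : Type*} [Field K] {p : σ → K} {i : σ} (hi : p i ≠ 0) :
    lineIdeal p = Ideal.span (Set.range fun j ↦ X j - C (p j / p i) * X i) := by
  set I := Ideal.span (Set.range fun j ↦ (X j - C (p j / p i) * X i : MvPolynomial σ K))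
  refine le_antisymm (fun g hg ↦ ?_) (Ideal.span_le.2 (Set.range_subset_iff.2 fun j ↦ ?_))
  · let restrict : MvPolynomial σ K →ₐ[K] Polynomial K :=
      aeval fun j ↦ Polynomial.C (p j) * Polynomial.X
    let lift : Polynomial K →ₐ[K] MvPolynomial σ K := Polynomial.aeval (C (p i)⁻¹ * X i)
    have mk_comp : (Ideal.Quotient.mkₐ K I).comp (lift.comp restrict) = Ideal.Quotient.mkₐ K I := by
      refine algHom_ext fun j ↦ Eq.symm ((Ideal.Quotient.mk_eq_mk_iff_sub_mem _ _).2 ?_)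
      have lift_restrict : (lift.comp restrict) (X j) = C (p j / p i) * X i := by
        simp [lift, restrict, div_eq_mul_inv, mul_assoc]
      change X j - (lift.comp restrict) (X j) ∈ I
      rw [lift_restrict]
      exact Ideal.subset_span (Set.mem_range_self j)
    have restrict_g : restrict g = 0 := hg
    rw [← Ideal.Quotient.eq_zero_iff_mem, ← Ideal.Quotient.mkₐ_eq_mk K, ← mk_comp]
    simp [restrict_g]
  · simp [lineIdeal, RingHom.mem_ker, ← mul_assoc, ← Polynomial.C_mul, div_mul_cancel₀ _ hi]

theorem lineIdeal_eq_span_pair {K : Type*} [Field K] {p : Fin 3 → K} {i : Fin 3} (hi : p i ≠ 0) :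
    lineIdeal p = Ideal.span {X (i.succAbove 0) - C (p (i.succAbove 0) / p i) * X i,
      X (i.succAbove 1) - C (p (i.succAbove 1) / p i) * X i} := by
  rw [lineIdeal_eq_span hi]
  refine le_antisymm (Ideal.span_le.2 (Set.range_subset_iff.2 fun j ↦ ?_))
    (Ideal.span_mono (Set.pair_subset ⟨_, rfl⟩ ⟨_, rfl⟩))
  obtain rfl | ⟨k, rfl⟩ := i.eq_self_or_eq_succAbove j
  · simp [div_self hi]
  · fin_cases k <;> exact Ideal.subset_span (by simp)

end Lines

theorem statement18_general {K : Type*} [Field K] [IsAlgClosed K] [CharZero K]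
    {f : MvPolynomial (Fin 3) K} {d : ℕ} (hd : d ≠ 0) (hf : f.IsHomogeneous d) :
    (∀ g k, 1 ≤ k → f ^ k * g ∈ brieskornSubmodule f → g ∈ brieskornSubmodule f) ↔
      ∀ p : Fin 3 → K, (∀ i, eval p (pderiv i f) = 0) → p = 0 := by
  constructor
  · intro htf p hp
    by_contra hp0
    obtain ⟨i, hi⟩ := Function.ne_iff.1 hp0
    have lech : LechIndependent (grad f) :=
      lechIndependent_grad hd hf fun g hg ↦ htf g 1 le_rfl (by rwa [pow_one])
    have line_prime := isPrime_lineIdeal p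
    rw [lineIdeal_eq_span_pair hi] at line_prime
    obtain ⟨j, hj⟩ := lech.exists_notMem K line_prime
    rw [← lineIdeal_eq_span_pair hi] at hj
    exact hj (mem_lineIdeal_of_isHomogeneous hf.pderiv (hp j))
  · exact fun hisolated g k _ ↦
      mem_brieskornSubmodule_of_pow_mul_mem hf (koszulExact_of_forall_eval_eq_zero hisolated) k

/-- For `f ∈ ℂ[x,y,z]` homogeneous of degree `d > 1`, the Brieskorn module
`B(f) = ℂ[x,y,z]/E_f` is torsion free over `ℂ[t]` (with `t` acting by multiplication by
`f`) iff `f` has an isolated singularity at the origin. -/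
theorem statement18 (f : MvPolynomial (Fin 3) ℂ) (d : ℕ) (hd : 1 < d)
    (hf : f.IsHomogeneous d) :
    (∀ (g : MvPolynomial (Fin 3) ℂ) (k : ℕ), 1 ≤ k → Emem f (f ^ k * g) → Emem f g) ↔
      (∀ p : Fin 3 → ℂ,
        eval p (pderiv 0 f) = 0 → eval p (pderiv 1 f) = 0 → eval p (pderiv 2 f) = 0 →
          p = 0) := by
  simpa [emem_iff_mem_brieskornSubmodule, Fin.forall_fin_succ] using
    statement18_general (Nat.ne_zero_of_lt hd) hf
end
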